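/- Suppose α > β > 0 satisfy ((k−1)/2^{k−1})(α−β) > √(4(k−1)((k/2^k)α + (1 − k/2^k)β)). Then, for (σ, ℋ) ∼ HSBM(n,p,q;k) with W = W(ℋ), the third-smallest eigenvalue of Π L_Γ Π is strictly positive with probability 1 − o(1) as n → ∞. -/

import Mathlib

open Finset Filter Matrix

open scoped Classical

/-- The `k`-element subsets of `[n]`, i.e. the potential hyperedges. -/
abbrev KSet (n k : ℕ) := {e : Finset (Fin n) // e.card = k}

/-- A `±1` label vector (encoded by `Bool`) is balanced if it has equally many
`+1`'s (`true`) and `-1`'s (`false`). -/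
abbrev balanced {n : ℕ} (σ : Fin n → Bool) : Prop :=
  2 * (Finset.univ.filter (fun i => σ i = true)).card = n

/-- `e` is in-cluster w.r.t. `σ`: `σ` is constant on `e`. -/
abbrev inCluster {n : ℕ} (σ : Fin n → Bool) (e : Finset (Fin n)) : Prop :=
  ∀ i ∈ e, ∀ j ∈ e, σ i = σ j

/-- Probability that `e` appears as an edge, given the labels `σ`. -/
noncomputable def edgeP {n : ℕ} (p q : ℝ) (σ : Fin n → Bool) (e : Finset (Fin n)) : ℝ :=
  if inCluster σ e then p else q

/-- Probability of observing exactly the hypergraph with edge-indicator `E`, given labels `σ`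
(edges appear independently). -/
noncomputable def hypProb {n k : ℕ} (p q : ℝ) (σ : Fin n → Bool) (E : KSet n k → Bool) : ℝ :=
  ∏ e : KSet n k, if E e then edgeP p q σ e.1 else 1 - edgeP p q σ e.1

/-- Uniform prior on balanced label vectors. -/
noncomputable def sigProb (n : ℕ) (σ : Fin n → Bool) : ℝ :=
  if balanced σ then 1 / ((Finset.univ.filter (fun τ : Fin n → Bool => balanced τ)).card : ℝ)
  else 0

/-- Probability of an event `P` under the joint law `HSBM(n,p,q;k)` of `(σ, ℋ)`. -/
noncomputable def prEvent (n k : ℕ) (p q : ℝ)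
    (P : (Fin n → Bool) → (KSet n k → Bool) → Prop) : ℝ :=
  ∑ σ : Fin n → Bool, ∑ E : KSet n k → Bool,
    sigProb n σ * hypProb p q σ E * (if P σ E then 1 else 0)

/-- Global sign flip. -/
def negB {n : ℕ} (σ : Fin n → Bool) : Fin n → Bool := fun i => !(σ i)

/-- The edge probability parameter `α · log n / C(n-1, k-1)`. -/
noncomputable def pParam (k : ℕ) (α : ℝ) (n : ℕ) : ℝ :=
  α * Real.log n / ((n - 1).choose (k - 1) : ℝ)

/-- The real `±1` vector associated to a Boolean label vector. -/
def sgn {n : ℕ} (σ : Fin n → Bool) : Fin n → ℝ := fun i => if σ i then 1 else -1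

/-- The rank-one matrix `σσᵀ`. -/
noncomputable def outer {n : ℕ} (σ : Fin n → Bool) : Matrix (Fin n) (Fin n) ℝ :=
  Matrix.of fun i j => sgn σ i * sgn σ j

/-- The weighted adjacency matrix `W(H)`: `W i j` is the number of hyperedges containing
both `i` and `j` (zero on the diagonal). -/
noncomputable def Wmat {n k : ℕ} (E : KSet n k → Bool) : Matrix (Fin n) (Fin n) ℝ :=
  Matrix.of fun i j => if i = j then 0 else
    ((Finset.univ.filter (fun e : KSet n k => E e = true ∧ i ∈ e.1 ∧ j ∈ e.1)).card : ℝ)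

/-- Feasibility for the SDP relaxation: `X ⪰ 0`, unit diagonal, `⟨X, 𝟙𝟙ᵀ⟩ = 0`. -/
def sdpFeasible {n : ℕ} (X : Matrix (Fin n) (Fin n) ℝ) : Prop :=
  X.PosSemidef ∧ (∀ i, X i i = 1) ∧ (∑ i, ∑ j, X i j) = 0

/-- The SDP objective `⟨W, X⟩`. -/
noncomputable def sdpObj {n : ℕ} (W X : Matrix (Fin n) (Fin n) ℝ) : ℝ :=
  ∑ i, ∑ j, W i j * X i j

/-- `Xs` is the unique optimal solution of the SDP with input `W`. -/
def sdpUniqueOpt {n : ℕ} (W Xs : Matrix (Fin n) (Fin n) ℝ) : Prop :=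
  sdpFeasible Xs ∧ ∀ X, sdpFeasible X → X ≠ Xs → sdpObj W X < sdpObj W Xs

/-- `Γ = diag(σ) W diag(σ)`. -/
noncomputable def GammaM {n : ℕ} (σ : Fin n → Bool) (W : Matrix (Fin n) (Fin n) ℝ) :
    Matrix (Fin n) (Fin n) ℝ :=
  Matrix.diagonal (sgn σ) * W * Matrix.diagonal (sgn σ)

/-- The Laplacian `L_Γ = diag(Γ𝟙) - Γ`. -/
noncomputable def LGamma {n : ℕ} (σ : Fin n → Bool) (W : Matrix (Fin n) (Fin n) ℝ) :
    Matrix (Fin n) (Fin n) ℝ :=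
  Matrix.diagonal (fun i => ∑ j, GammaM σ W i j) - GammaM σ W

/-- `Π = I - (1/n)𝟙𝟙ᵀ - (1/n)σσᵀ`, the projector onto `span{𝟙, σ}ᗮ`. -/
noncomputable def PiM {n : ℕ} (σ : Fin n → Bool) : Matrix (Fin n) (Fin n) ℝ :=
  1 - (n : ℝ)⁻¹ • Matrix.of (fun _ _ => (1 : ℝ)) - (n : ℝ)⁻¹ • outer σ

/-- The third-smallest eigenvalue of a symmetric matrix, via the Courant–Fischer
max–min characterization over subspaces of dimension `n - 2`. -/
noncomputable def lambda3 {n : ℕ} (M : Matrix (Fin n) (Fin n) ℝ) : ℝ :=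
  sSup {r : ℝ | ∃ V : Submodule ℝ (Fin n → ℝ), Module.finrank ℝ V = n - 2 ∧
    ∀ x ∈ V, r * (∑ i, x i ^ 2) ≤ x ⬝ᵥ M.mulVec x}

/-
By the variational characterization it suffices that, on vectors `y` orthogonal to `𝟙` and `σ`, the
diagonal part of `L_Γ` dominates the quadratic form of `Γ`. A Chernoff bound for the signed degrees,
with the tilt that the condition on `α` and `β` makes profitable, bounds the diagonal below by
`ε log n`.

For the other half, replacing `y` by `σ y` turns `Γ` into `W`, whose mean has a nonpositive
quadratic form on vectors summing to zero on each cluster. It remains to show that the quadratic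
form of `W` exceeds that of its mean by `o(log n) ‖y‖²` at most. The bounded part of `y` only sees
the cut norm of `W - 𝔼 W`, controlled by a union bound over sign vectors; the few heavy coordinates
induce a sparse graph, and peeling off its low-degree vertices bounds its quadratic form; the pairs
of coordinates of very different size are negligible since the degrees are `O(log n)`.
-/

open MeasureTheory ProbabilityTheory

section BernoulliProduct

variable {ι : Type*} [Fintype ι]

/-- The law of independent random bits `E e`, each equal to `true` with probability `w e`. -/
noncomputable def bernoulliPi (w : ι → unitInterval) : Measure (ι → Bool) :=
  Measure.pi fun e => bernoulliMeasure true false (w e)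

instance (w : ι → unitInterval) : IsProbabilityMeasure (bernoulliPi w) := by
  unfold bernoulliPi; infer_instance

lemma bernoulliPi_real_singleton (w : ι → unitInterval) (E : ι → Bool) :
    (bernoulliPi w).real {E} = ∏ e, if E e then (w e : ℝ) else 1 - w e := by
  simp only [bernoulliPi, measureReal_def, Measure.pi_singleton, ENNReal.toReal_prod]
  refine prod_congr rfl fun e _ => ?_
  rw [← measureReal_def]
  cases E e <;> simp

lemma bernoulliPi_real_eq_sum (w : ι → unitInterval) (Q : (ι → Bool) → Prop) :
    (bernoulliPi w).real {E | Q E} =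
      ∑ E, (∏ e, if E e then (w e : ℝ) else 1 - w e) * if Q E then 1 else 0 := by
  have hQ : {E | Q E} = ((univ.filter Q : Finset (ι → Bool)) : Set (ι → Bool)) := by simp
  simp_rw [hQ, ← sum_measureReal_singleton, sum_filter, bernoulliPi_real_singleton, mul_ite,
    mul_one, mul_zero]

lemma mgf_bernoulliPi_coord (w : ι → unitInterval) (a : ℝ) (e : ι) :
    mgf (fun E : ι → Bool => if E e then a else 0) (bernoulliPi w) 1 =
      1 + w e * (Real.exp a - 1) := by
  have h := integral_comp_eval (μ := fun e => bernoulliMeasure true false (w e)) (i := e)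
    (f := fun b : Bool => Real.exp (1 * if b then a else 0))
    Measurable.of_discrete.aestronglyMeasurable
  simp only [mgf, bernoulliPi, h, integral_bernoulliMeasure]
  simp
  ring

lemma chernoff_bernoulliPi (w : ι → unitInterval) (a : ι → ℝ) (t : ℝ) :
    (bernoulliPi w).real {E | t ≤ ∑ e with E e, a e} ≤
      Real.exp (-t + ∑ e, w e * (Real.exp (a e) - 1)) := by
  set X : ι → (ι → Bool) → ℝ := fun e E => if E e then a e else 0
  have hX : iIndepFun X (bernoulliPi w) :=
    iIndepFun_pi (X := fun e (b : Bool) => if b then a e else 0)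
      fun e => Measurable.of_discrete.aemeasurable
  have hmgf : mgf (∑ e, X e) (bernoulliPi w) 1 ≤ Real.exp (∑ e, w e * (Real.exp (a e) - 1)) := by
    rw [hX.mgf_sum fun _ => .of_discrete, Real.exp_sum]
    refine prod_le_prod (fun _ _ => mgf_nonneg) fun e _ => ?_
    rw [mgf_bernoulliPi_coord, add_comm]
    exact Real.add_one_le_exp _
  have hset : {E | t ≤ ∑ e with E e, a e} = {E | t ≤ (∑ e, X e) E} := by
    simp only [X, Finset.sum_apply, sum_filter]
  calc (bernoulliPi w).real {E | t ≤ ∑ e with E e, a e}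
      ≤ Real.exp (-1 * t) * mgf (∑ e, X e) (bernoulliPi w) 1 := by
        rw [hset]; exact measure_ge_le_exp_mul_mgf t zero_le_one .of_finite
    _ ≤ _ := by
        rw [Real.exp_add, neg_one_mul]
        exact mul_le_mul_of_nonneg_left hmgf (Real.exp_pos _).le

end BernoulliProduct

section Truncation

variable {V : Type*}

/-- The entries of `y` of absolute value at most `T`, the others being replaced by `0`. -/
noncomputable def lightPart (T : ℝ) (y : V → ℝ) : V → ℝ := fun i => if |y i| ≤ T then y i else 0

/-- The entries of `y` of absolute value more than `T`, the others being replaced by `0`. -/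
noncomputable def heavyPart (T : ℝ) (y : V → ℝ) : V → ℝ := fun i => if |y i| ≤ T then 0 else y i

lemma lightPart_add_heavyPart (T : ℝ) (y : V → ℝ) : lightPart T y + heavyPart T y = y := by
  ext i
  by_cases h : |y i| ≤ T <;> simp [lightPart, heavyPart, h]

lemma abs_lightPart_le {T : ℝ} (hT : 0 ≤ T) (y : V → ℝ) (i : V) : |lightPart T y i| ≤ T := by
  unfold lightPart
  split_ifs with h
  · exact h
  · simpa using hT

lemma abs_lightPart_le_abs (T : ℝ) (y : V → ℝ) (i : V) : |lightPart T y i| ≤ |y i| := by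
  unfold lightPart
  split_ifs <;> simp

lemma abs_heavyPart_le_abs (T : ℝ) (y : V → ℝ) (i : V) : |heavyPart T y i| ≤ |y i| := by
  unfold heavyPart
  split_ifs <;> simp

lemma mul_abs_heavyPart_le_sq (T : ℝ) (y : V → ℝ) (i : V) : T * |heavyPart T y i| ≤ y i ^ 2 := by
  unfold heavyPart
  split_ifs with h
  · simpa using sq_nonneg (y i)
  · rw [← sq_abs, sq]
    exact mul_le_mul_of_nonneg_right (not_le.mp h).le (abs_nonneg _)

lemma card_mul_sq_le_sum_sq [Fintype V] {T : ℝ} (hT : 0 ≤ T) (y : V → ℝ) :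
    (#{i | T < |y i|} : ℝ) * T ^ 2 ≤ ∑ i, y i ^ 2 := by
  rw [← nsmul_eq_mul, ← sum_const]
  refine (sum_le_sum fun i hi => ?_).trans (sum_le_univ_sum_of_nonneg fun i => sq_nonneg (y i))
  rw [← sq_abs (y i)]
  exact pow_le_pow_left₀ hT (mem_filter.mp hi).2.le 2

lemma abs_mul_abs_le_of_heavy_of_light {T₁ T₂ a b : ℝ} (hT₁ : 0 < T₁) (hT : T₁ ≤ T₂)
    (ha : T₂ < |a|) (hb : |b| ≤ T₁) : |a| * |b| ≤ T₁ / T₂ * a ^ 2 := by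
  have hT₂ : 0 < T₂ := hT₁.trans_le hT
  have hba : |b| ≤ T₁ / T₂ * |a| := by
    rw [div_mul_eq_mul_div, le_div_iff₀ hT₂]
    exact mul_le_mul hb ha.le hT₂.le hT₁.le
  calc |a| * |b| ≤ |a| * (T₁ / T₂ * |a|) := mul_le_mul_of_nonneg_left hba (abs_nonneg a)
    _ = T₁ / T₂ * a ^ 2 := by rw [← sq_abs a]; ring

-- Two entries are both at most `T₂`, or both more than `T₁`, or their ratio is at most `T₁ / T₂`.
lemma mul_le_light_add_heavy_add_mixed {T₁ T₂ : ℝ} (hT₁ : 0 < T₁) (hT : T₁ ≤ T₂) (y : V → ℝ)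
    (i j : V) :
    y i * y j ≤ lightPart T₂ y i * lightPart T₂ y j + |heavyPart T₁ y i| * |heavyPart T₁ y j| +
      T₁ / T₂ * (y i ^ 2 + y j ^ 2) := by
  have hT₂ : 0 < T₂ := hT₁.trans_le hT
  have hratio : ∀ l, 0 ≤ T₁ / T₂ * y l ^ 2 := fun l => by positivity
  have hheavy : 0 ≤ |heavyPart T₁ y i| * |heavyPart T₁ y j| := by positivity
  have heq : ∀ l, T₁ < |y l| → heavyPart T₁ y l = y l := fun l hl => if_neg (not_le.mpr hl)
  have hzero : ∀ l, T₂ < |y l| → lightPart T₂ y l = 0 := fun l hl => if_neg (not_le.mpr hl)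
  have habs : y i * y j ≤ |y i| * |y j| := (le_abs_self _).trans (abs_mul _ _).le
  rcases le_or_gt |y i| T₂ with hi | hi <;> rcases le_or_gt |y j| T₂ with hj | hj
  · have hli : lightPart T₂ y i = y i := if_pos hi
    have hlj : lightPart T₂ y j = y j := if_pos hj
    rw [hli, hlj]
    linarith [hratio i, hratio j]
  · rw [hzero j hj, mul_zero]
    rcases le_or_gt |y i| T₁ with hi' | hi'
    · linarith [abs_mul_abs_le_of_heavy_of_light hT₁ hT hj hi', hratio i]
    · rw [heq i hi', heq j (hT.trans_lt hj)]
      linarith [hratio i, hratio j]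
  all_goals
    rw [hzero i hi, zero_mul]
    rcases le_or_gt |y j| T₁ with hj' | hj'
    · linarith [abs_mul_abs_le_of_heavy_of_light hT₁ hT hi hj', hratio j]
    · rw [heq j hj', heq i (hT.trans_lt hi)]
      linarith [hratio i, hratio j]

end Truncation

section QuadraticForm

variable {V : Type*}

lemma sum_sum_insert_of_symm {f : V → V → ℝ} (hsymm : ∀ i j, f i j = f j i)
    (hdiag : ∀ i, f i i = 0) {a : V} {S : Finset V} (ha : a ∉ S) :
    ∑ i ∈ insert a S, ∑ j ∈ insert a S, f i j =
      ∑ j ∈ S, 2 * f a j + ∑ i ∈ S, ∑ j ∈ S, f i j := by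
  simp only [sum_insert ha, hdiag, sum_add_distrib, hsymm _ a, ← mul_sum]
  ring

/- Peel off a vertex `a` of smallest degree: its remaining degree is at most `h`, so AM-GM with
weight `l` bounds the terms it is involved in by `h * l * z a ^ 2`, up to the subtracted squares. -/
lemma sum_sum_mul_sub_le_of_peeling {W : Matrix V V ℝ} (hsymm : W.IsSymm)
    (hnonneg : ∀ i j, 0 ≤ W i j) (hdiag : ∀ i, W i i = 0) (z : V → ℝ) {h l : ℝ} (hl : 0 < l)
    (S : Finset V) (hS : ∀ T ⊆ S, ∑ i ∈ T, ∑ j ∈ T, W i j ≤ h * #T) :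
    ∑ i ∈ S, ∑ j ∈ S, W i j * (z i * z j - (z i ^ 2 + z j ^ 2) / (2 * l)) ≤
      h * l * ∑ i ∈ S, z i ^ 2 := by
  induction S using Finset.eraseInduction with
  | H S ih =>
  obtain rfl | hne := S.eq_empty_or_nonempty
  · simp
  obtain ⟨a, ha, hdeg⟩ : ∃ a ∈ S, ∑ j ∈ S, W a j ≤ h :=
    exists_le_of_sum_le hne (by simpa [mul_comm] using hS S subset_rfl)
  have haR : a ∉ S.erase a := notMem_erase a S
  have hdegR : ∑ j ∈ S.erase a, W a j ≤ h := by rwa [sum_erase S (hdiag a)]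
  have hpeel : ∑ j ∈ S.erase a, 2 * (W a j * (z a * z j - (z a ^ 2 + z j ^ 2) / (2 * l))) ≤
      h * l * z a ^ 2 := by
    calc _ ≤ ∑ j ∈ S.erase a, W a j * (l * z a ^ 2) := by
          refine sum_le_sum fun j _ => ?_
          have hsq : 0 ≤ z a ^ 2 / l := by positivity
          rw [mul_left_comm]
          refine mul_le_mul_of_nonneg_left ?_ (hnonneg a j)
          have hhalf : 2 * ((z a ^ 2 + z j ^ 2) / (2 * l)) = z a ^ 2 / l + z j ^ 2 / l := by
            field_simp
          linarith [two_mul_le_add_mul_sq (a := z a) (b := z j) hl, inv_mul_eq_div l (z j ^ 2)]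
      _ ≤ h * l * z a ^ 2 := by
          rw [← sum_mul, mul_assoc]
          exact mul_le_mul_of_nonneg_right hdegR (by positivity)
  have hrest := ih a ha fun T hT => hS T (hT.trans (erase_subset a S))
  rw [← insert_erase ha, sum_sum_insert_of_symm _ _ haR, sum_insert haR, mul_add]
  · exact add_le_add hpeel hrest
  · intro i j
    rw [hsymm.apply]
    ring
  · simp [hdiag]

variable [Fintype V]

/-- Every vertex set `S` of size at most `γ|V|` spans total weight at most `t|S|`. -/
def IsLocallySparse (W : Matrix V V ℝ) (γ t : ℝ) : Prop :=
  ∀ S : Finset V, (#S : ℝ) ≤ γ * Fintype.card V → ∑ i ∈ S, ∑ j ∈ S, W i j ≤ t * #S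

/-- The cut norm of `A` is at most `t`, in its one-sided form over vectors with entries in
`{-1, 0, 1}`. -/
def CutNormLE (A : Matrix V V ℝ) (t : ℝ) : Prop :=
  ∀ s r : V → SignType, (fun i => (s i : ℝ)) ⬝ᵥ A *ᵥ (fun j => (r j : ℝ)) ≤ t

lemma dotProduct_mulVec_eq_sum (A : Matrix V V ℝ) (x y : V → ℝ) :
    x ⬝ᵥ A *ᵥ y = ∑ i, ∑ j, A i j * (x i * y j) := by
  simp only [dotProduct, mulVec, mul_sum]
  exact sum_congr rfl fun i _ => sum_congr rfl fun j _ => by ring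

lemma dotProduct_le_mul_sign_dotProduct {M : ℝ} {u : V → ℝ} (hu : ∀ i, |u i| ≤ M) (c : V → ℝ) :
    u ⬝ᵥ c ≤ M * ((fun i => (SignType.sign (c i) : ℝ)) ⬝ᵥ c) := by
  simp only [dotProduct, sign_mul_self, mul_sum]
  refine sum_le_sum fun i _ => (le_abs_self _).trans ?_
  rw [abs_mul]
  exact mul_le_mul_of_nonneg_right (hu i) (abs_nonneg _)

lemma CutNormLE.dotProduct_mulVec_le {A : Matrix V V ℝ} {t M : ℝ} (hA : CutNormLE A t)
    (hM : 0 ≤ M) {u : V → ℝ} (hu : ∀ i, |u i| ≤ M) : u ⬝ᵥ A *ᵥ u ≤ M ^ 2 * t := by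
  set s : V → SignType := fun i => SignType.sign ((A *ᵥ u) i)
  set r : V → SignType := fun j => SignType.sign (((fun i => (s i : ℝ)) ᵥ* A) j)
  calc u ⬝ᵥ A *ᵥ u ≤ M * ((fun i => (s i : ℝ)) ⬝ᵥ A *ᵥ u) := dotProduct_le_mul_sign_dotProduct hu _
    _ = M * (u ⬝ᵥ (fun i => (s i : ℝ)) ᵥ* A) := by rw [dotProduct_mulVec, dotProduct_comm]
    _ ≤ M * (M * ((fun j => (r j : ℝ)) ⬝ᵥ (fun i => (s i : ℝ)) ᵥ* A)) :=
        mul_le_mul_of_nonneg_left (dotProduct_le_mul_sign_dotProduct hu _) hM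
    _ = M ^ 2 * ((fun i => (s i : ℝ)) ⬝ᵥ A *ᵥ fun j => (r j : ℝ)) := by
        rw [dotProduct_comm, ← dotProduct_mulVec]; ring
    _ ≤ M ^ 2 * t := mul_le_mul_of_nonneg_left (hA s r) (sq_nonneg M)

lemma abs_dotProduct_mulVec_le {A : Matrix V V ℝ} {b : ℝ} (hA : ∀ i j, |A i j| ≤ b)
    (x y : V → ℝ) : |x ⬝ᵥ A *ᵥ y| ≤ b * ((∑ i, |x i|) * ∑ j, |y j|) := by
  rw [dotProduct_mulVec_eq_sum, sum_mul_sum]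
  simp_rw [mul_sum]
  refine (abs_sum_le_sum_abs _ _).trans <| sum_le_sum fun i _ =>
    (abs_sum_le_sum_abs _ _).trans <| sum_le_sum fun j _ => ?_
  rw [abs_mul, abs_mul]
  exact mul_le_mul_of_nonneg_right (hA i j) (by positivity)

lemma lightPart_dotProduct_mulVec_le {A : Matrix V V ℝ} {b T : ℝ} (hb : 0 ≤ b)
    (hA : ∀ i j, |A i j| ≤ b) (y : V → ℝ) :
    lightPart T y ⬝ᵥ A *ᵥ lightPart T y ≤
      y ⬝ᵥ A *ᵥ y + 2 * b * ((∑ i, |y i|) * ∑ i, |heavyPart T y i|) := by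
  set u := lightPart T y
  set v := heavyPart T y
  have hyuv : y = u + v := (lightPart_add_heavyPart T y).symm
  have hexpand : y ⬝ᵥ A *ᵥ y = u ⬝ᵥ A *ᵥ u + u ⬝ᵥ A *ᵥ v + v ⬝ᵥ A *ᵥ y := by
    nth_rewrite 1 [hyuv]
    rw [add_dotProduct, ← dotProduct_add, ← mulVec_add, ← hyuv]
  have huy : ∑ i, |u i| ≤ ∑ i, |y i| := sum_le_sum fun i _ => abs_lightPart_le_abs T y i
  have huv : |u ⬝ᵥ A *ᵥ v| ≤ b * ((∑ i, |y i|) * ∑ i, |v i|) :=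
    (abs_dotProduct_mulVec_le hA u v).trans (by gcongr)
  have hvy : |v ⬝ᵥ A *ᵥ y| ≤ b * ((∑ i, |y i|) * ∑ i, |v i|) :=
    (abs_dotProduct_mulVec_le hA v y).trans_eq (by ring)
  linarith [neg_le_of_abs_le huv, neg_le_of_abs_le hvy]

lemma IsLocallySparse.dotProduct_mulVec_le {W : Matrix V V ℝ} {γ h D l : ℝ}
    (hW : IsLocallySparse W γ h) (hsymm : W.IsSymm) (hnonneg : ∀ i j, 0 ≤ W i j)
    (hdiag : ∀ i, W i i = 0) (hdeg : ∀ i, ∑ j, W i j ≤ D) (hl : 0 < l) {z : V → ℝ}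
    (hz : (#{i | z i ≠ 0} : ℝ) ≤ γ * Fintype.card V) :
    z ⬝ᵥ W *ᵥ z ≤ (h * l + D / l) * ∑ i, z i ^ 2 := by
  set S : Finset V := {i | z i ≠ 0}
  have hzero : ∀ i ∉ S, z i = 0 := fun i hi => by simpa [S] using hi
  have hrestrict : z ⬝ᵥ W *ᵥ z = ∑ i ∈ S, ∑ j ∈ S, W i j * (z i * z j) := by
    rw [dotProduct_mulVec_eq_sum]
    rw [← sum_subset (subset_univ S) fun i _ hi => by simp [hzero i hi]]
    refine sum_congr rfl fun i _ => (sum_subset (subset_univ S) fun j _ hj => ?_).symm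
    simp [hzero j hj]
  have hpeel := sum_sum_mul_sub_le_of_peeling hsymm hnonneg hdiag z hl S fun T hT =>
    hW T <| (Nat.cast_le.mpr (card_le_card hT)).trans hz
  have hsq : ∑ i ∈ S, ∑ j ∈ S, W i j * z i ^ 2 ≤ D * ∑ i ∈ S, z i ^ 2 := by
    rw [mul_sum]
    refine sum_le_sum fun i _ => ?_
    rw [← sum_mul]
    exact mul_le_mul_of_nonneg_right
      ((sum_le_univ_sum_of_nonneg (hnonneg i)).trans (hdeg i)) (sq_nonneg _)
  have hsq' : ∑ i ∈ S, ∑ j ∈ S, W i j * z j ^ 2 = ∑ i ∈ S, ∑ j ∈ S, W i j * z i ^ 2 := by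
    rw [sum_comm]
    simp_rw [hsymm.apply]
  have hsplit : ∑ i ∈ S, ∑ j ∈ S, W i j * (z i * z j - (z i ^ 2 + z j ^ 2) / (2 * l)) =
      z ⬝ᵥ W *ᵥ z - (∑ i ∈ S, ∑ j ∈ S, W i j * z i ^ 2) / l := by
    have : ∀ i j, W i j * (z i * z j - (z i ^ 2 + z j ^ 2) / (2 * l)) =
        W i j * (z i * z j) - (W i j * z i ^ 2 + W i j * z j ^ 2) / (2 * l) := fun i j => by ring
    simp_rw [this, sum_sub_distrib, ← sum_div, sum_add_distrib]
    rw [hsq', hrestrict]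
    field_simp
    ring
  have hS : ∑ i ∈ S, z i ^ 2 = ∑ i, z i ^ 2 :=
    sum_subset (subset_univ S) fun i _ hi => by simp [hzero i hi]
  have hdiv := div_le_div_of_nonneg_right hsq hl.le
  rw [hS] at hpeel hdiv
  calc z ⬝ᵥ W *ᵥ z ≤ h * l * ∑ i, z i ^ 2 + D * (∑ i, z i ^ 2) / l := by linarith
    _ = _ := by ring

end QuadraticForm

section PseudorandomQuadraticForm

variable {V : Type*} [Fintype V]

lemma dotProduct_mulVec_le_light_add_heavy_add_mixed {W : Matrix V V ℝ} (hsymm : W.IsSymm)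
    (hnonneg : ∀ i j, 0 ≤ W i j) {D : ℝ} (hdeg : ∀ i, ∑ j, W i j ≤ D) {T₁ T₂ : ℝ} (hT₁ : 0 < T₁)
    (hT : T₁ ≤ T₂) (y : V → ℝ) :
    y ⬝ᵥ W *ᵥ y ≤ lightPart T₂ y ⬝ᵥ W *ᵥ lightPart T₂ y +
      (fun i => |heavyPart T₁ y i|) ⬝ᵥ W *ᵥ (fun i => |heavyPart T₁ y i|) +
      2 * (T₁ / T₂) * D * ∑ i, y i ^ 2 := by
  have hT₂ : 0 < T₂ := hT₁.trans_le hT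
  have hrow : ∑ i, ∑ j, W i j * y i ^ 2 ≤ D * ∑ i, y i ^ 2 := by
    rw [mul_sum]
    refine sum_le_sum fun i _ => ?_
    rw [← sum_mul]
    exact mul_le_mul_of_nonneg_right (hdeg i) (sq_nonneg _)
  have hcol : ∑ i, ∑ j, W i j * y j ^ 2 = ∑ i, ∑ j, W i j * y i ^ 2 := by
    rw [sum_comm]
    simp_rw [hsymm.apply]
  have hmixed : ∑ i, ∑ j, W i j * (T₁ / T₂ * (y i ^ 2 + y j ^ 2)) ≤
      2 * (T₁ / T₂) * D * ∑ i, y i ^ 2 := by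
    simp_rw [mul_left_comm (W _ _), ← mul_sum, mul_add, sum_add_distrib]
    rw [hcol]
    calc _ = 2 * (T₁ / T₂) * ∑ i, ∑ j, W i j * y i ^ 2 := by ring
      _ ≤ 2 * (T₁ / T₂) * (D * ∑ i, y i ^ 2) := mul_le_mul_of_nonneg_left hrow (by positivity)
      _ = _ := by ring
  refine le_trans ?_ (add_le_add_right hmixed _)
  simp_rw [dotProduct_mulVec_eq_sum, ← sum_add_distrib, ← mul_add]
  exact sum_le_sum fun i _ => sum_le_sum fun j _ =>
    mul_le_mul_of_nonneg_left (mul_le_light_add_heavy_add_mixed hT₁ hT y i j) (hnonneg i j)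

lemma dotProduct_mulVec_le_of_thresholds {W EW : Matrix V V ℝ} (hsymm : W.IsSymm)
    (hnonneg : ∀ i j, 0 ≤ W i j) (hdiag : ∀ i, W i i = 0) {D b γ h t : ℝ}
    (hdeg : ∀ i, ∑ j, W i j ≤ D) (hb : 0 ≤ b) (hEW : ∀ i j, |EW i j| ≤ b)
    (hsparse : IsLocallySparse W γ h) (hcut : CutNormLE (W - EW) t) {y : V → ℝ}
    (hy : y ⬝ᵥ EW *ᵥ y ≤ 0) {T₁ T₂ l : ℝ} (hT₁ : 0 < T₁) (hT : T₁ ≤ T₂) (hl : 0 < l)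
    (hcard : (#{i | T₁ < |y i|} : ℝ) ≤ γ * Fintype.card V) (hhl : 0 ≤ h * l + D / l) :
    y ⬝ᵥ W *ᵥ y ≤ T₂ ^ 2 * t + 2 * b * ((∑ i, |y i|) * ∑ i, |heavyPart T₂ y i|) +
      (h * l + D / l + 2 * (T₁ / T₂) * D) * ∑ i, y i ^ 2 := by
  have hT₂ : 0 ≤ T₂ := hT₁.le.trans hT
  set u := lightPart T₂ y
  set z : V → ℝ := fun i => |heavyPart T₁ y i|
  have hlight : u ⬝ᵥ W *ᵥ u = u ⬝ᵥ (W - EW) *ᵥ u + u ⬝ᵥ EW *ᵥ u := by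
    rw [sub_mulVec, dotProduct_sub, sub_add_cancel]
  have hcut_le : u ⬝ᵥ (W - EW) *ᵥ u ≤ T₂ ^ 2 * t :=
    hcut.dotProduct_mulVec_le hT₂ (abs_lightPart_le hT₂ y)
  have hmean : u ⬝ᵥ EW *ᵥ u ≤ y ⬝ᵥ EW *ᵥ y + 2 * b * ((∑ i, |y i|) * ∑ i, |heavyPart T₂ y i|) :=
    lightPart_dotProduct_mulVec_le hb hEW y
  have hsupport : #{i | z i ≠ 0} ≤ #{i | T₁ < |y i|} :=
    card_le_card <| monotone_filter_right _ fun i _ => by simp +contextual [z, heavyPart]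
  have hheavy : z ⬝ᵥ W *ᵥ z ≤ (h * l + D / l) * ∑ i, z i ^ 2 :=
    hsparse.dotProduct_mulVec_le hsymm hnonneg hdiag hdeg hl <|
      (Nat.cast_le.mpr hsupport).trans hcard
  have hz : ∑ i, z i ^ 2 ≤ ∑ i, y i ^ 2 := sum_le_sum fun i _ => by
    simpa [z] using sq_le_sq.mpr (abs_heavyPart_le_abs T₁ y i)
  have hsplit := dotProduct_mulVec_le_light_add_heavy_add_mixed hsymm hnonneg hdeg hT₁ hT y
  linarith [mul_le_mul_of_nonneg_left hz hhl]

lemma sum_abs_le_card_mul_rms {y : V → ℝ} {τ : ℝ} (hτ : 0 ≤ τ)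
    (hτy : Fintype.card V * τ ^ 2 = ∑ i, y i ^ 2) : ∑ i, |y i| ≤ Fintype.card V * τ := by
  refine le_of_sq_le_sq ?_ (by positivity)
  have := sq_sum_le_card_mul_sum_sq (s := univ) (f := fun i => |y i|)
  simp only [sq_abs, card_univ, ← hτy] at this
  linarith

lemma sum_abs_heavyPart_le_card_mul_rms_div {y : V → ℝ} {K τ : ℝ} (hK : 0 < K) (hτ : 0 < τ)
    (hτy : Fintype.card V * τ ^ 2 = ∑ i, y i ^ 2) :
    ∑ i, |heavyPart (K * τ) y i| ≤ Fintype.card V * τ / K := by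
  rw [le_div_iff₀ hK]
  refine le_of_mul_le_mul_right ?_ hτ
  calc (∑ i, |heavyPart (K * τ) y i|) * K * τ = ∑ i, K * τ * |heavyPart (K * τ) y i| := by
        rw [← mul_sum]; ring
    _ ≤ ∑ i, y i ^ 2 := sum_le_sum fun i _ => mul_abs_heavyPart_le_sq _ y i
    _ = Fintype.card V * τ * τ := by rw [← hτy]; ring

lemma card_rms_lt_le {y : V → ℝ} {γ K τ : ℝ} (hγ : 1 ≤ γ * K ^ 2) (hK : 0 < K) (hτ : 0 < τ)
    (hτy : Fintype.card V * τ ^ 2 = ∑ i, y i ^ 2) :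
    (#{i | K * τ < |y i|} : ℝ) ≤ γ * Fintype.card V := by
  have hmarkov := card_mul_sq_le_sum_sq (mul_pos hK hτ).le y
  rw [← hτy] at hmarkov
  have hcard : (#{i | K * τ < |y i|} : ℝ) * K ^ 2 ≤ Fintype.card V :=
    le_of_mul_le_mul_right (by linarith) (pow_pos hτ 2)
  have hγ0 : 0 < γ := pos_of_mul_pos_left (one_pos.trans_le hγ) (sq_nonneg _)
  calc (#{i | K * τ < |y i|} : ℝ) ≤ #{i | K * τ < |y i|} * (γ * K ^ 2) :=
        le_mul_of_one_le_right (Nat.cast_nonneg _) hγ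
    _ = γ * (#{i | K * τ < |y i|} * K ^ 2) := by ring
    _ ≤ γ * Fintype.card V := mul_le_mul_of_nonneg_left hcard hγ0.le

/- The thresholds are multiples `K₁ τ ≤ K₂ τ` of the root mean square `τ` of `y`: then fewer than
`|V| / K₁ ^ 2` entries exceed `K₁ τ`, and the entries exceeding `K₂ τ` sum to at most
`|V| τ / K₂`. -/
lemma dotProduct_mulVec_le_of_rms_thresholds {W EW : Matrix V V ℝ} (hsymm : W.IsSymm)
    (hnonneg : ∀ i j, 0 ≤ W i j) (hdiag : ∀ i, W i i = 0) {d C C' γ h η K₁ K₂ l : ℝ} (hd : 0 ≤ d)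
    (hC : 0 ≤ C) (hC' : 0 ≤ C') (hh : 0 ≤ h) (hl : 0 < l) (hK₁ : 0 < K₁) (hK : K₁ ≤ K₂)
    (hγ : 1 ≤ γ * K₁ ^ 2) (hdeg : ∀ i, ∑ j, W i j ≤ C' * d)
    (hEW : ∀ i j, |EW i j| ≤ C * d / Fintype.card V)
    (hsparse : IsLocallySparse W γ (h * d)) (hcut : CutNormLE (W - EW) (η * d * Fintype.card V))
    {y : V → ℝ} (hy : y ⬝ᵥ EW *ᵥ y ≤ 0) :
    y ⬝ᵥ W *ᵥ y ≤
      (K₂ ^ 2 * η + 2 * C / K₂ + (h * l + C' / l) + 2 * (K₁ / K₂) * C') * d * ∑ i, y i ^ 2 := by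
  have hK₂ : 0 < K₂ := hK₁.trans_le hK
  set n : ℝ := (Fintype.card V : ℝ)
  set Q := ∑ i, y i ^ 2
  obtain hQ | hQ : 0 = Q ∨ 0 < Q := (sum_nonneg fun i _ => sq_nonneg (y i)).eq_or_lt
  · have hy0 : y = 0 := by
      ext i
      exact pow_eq_zero_iff two_ne_zero |>.mp <|
        (sum_eq_zero_iff_of_nonneg fun i _ => sq_nonneg (y i)).mp hQ.symm i (mem_univ i)
    rw [← hQ, hy0]
    simp
  have hn : 0 < n := by
    have : Nonempty V := (nonempty_of_sum_ne_zero hQ.ne').to_type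
    exact Nat.cast_pos.mpr Fintype.card_pos
  set τ := √(Q / n)
  have hτ : 0 < τ := Real.sqrt_pos.mpr (by positivity)
  have hτQ : n * τ ^ 2 = Q := by rw [Real.sq_sqrt (by positivity)]; field_simp
  have hmain := dotProduct_mulVec_le_of_thresholds hsymm hnonneg hdiag hdeg (by positivity) hEW
    hsparse hcut hy (mul_pos hK₁ hτ) (mul_le_mul_of_nonneg_right hK hτ.le) hl
    (card_rms_lt_le hγ hK₁ hτ hτQ) (by positivity)
  have hb : 2 * (C * d / n) * ((∑ i, |y i|) * ∑ i, |heavyPart (K₂ * τ) y i|) ≤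
      2 * (C * d / n) * (n * τ * (n * τ / K₂)) := by
    have := sum_abs_le_card_mul_rms hτ.le hτQ
    have := sum_abs_heavyPart_le_card_mul_rms_div hK₂ hτ hτQ
    gcongr
  have hb' : 2 * (C * d / n) * (n * τ * (n * τ / K₂)) = 2 * C / K₂ * d * Q := by
    rw [← hτQ]; field_simp
  have hcut' : (K₂ * τ) ^ 2 * (η * d * n) = K₂ ^ 2 * η * d * Q := by rw [← hτQ]; ring
  have hrest : (h * d * l + C' * d / l + 2 * (K₁ * τ / (K₂ * τ)) * (C' * d)) * Q =
      (h * l + C' / l + 2 * (K₁ / K₂) * C') * d * Q := by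
    rw [mul_div_mul_right _ _ hτ.ne']; ring
  linarith

lemma exists_forall_dotProduct_mulVec_le_mul_sum_sq {C C' ε : ℝ} (hC : 0 ≤ C) (hC' : 0 < C')
    (hε : 0 < ε) :
    ∃ h > 0, ∀ γ > 0, ∃ η > 0, ∀ {V : Type*} [Fintype V] {W EW : Matrix V V ℝ} {d : ℝ}, 0 ≤ d →
      W.IsSymm → (∀ i j, 0 ≤ W i j) → (∀ i, W i i = 0) → (∀ i, ∑ j, W i j ≤ C' * d) →
      (∀ i j, |EW i j| ≤ C * d / Fintype.card V) → IsLocallySparse W γ (h * d) →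
      CutNormLE (W - EW) (η * d * Fintype.card V) →
      ∀ y : V → ℝ, y ⬝ᵥ EW *ᵥ y ≤ 0 → y ⬝ᵥ W *ᵥ y ≤ ε * d * ∑ i, y i ^ 2 := by
  set l := 8 * C' / ε with hl
  have hlpos : 0 < l := by positivity
  refine ⟨ε / (8 * l), by positivity, fun γ hγ => ?_⟩
  set K₁ := 1 + 1 / γ
  set K₂ := K₁ + 16 * (C + K₁ * C') / ε with hK₂
  have hK₁pos : 0 < K₁ := by positivity
  have hK₂pos : 0 < K₂ := by positivity
  have hK : K₁ ≤ K₂ := le_add_of_nonneg_right (by positivity)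
  have hγK : 1 ≤ γ * K₁ ^ 2 := by
    have : γ * K₁ ^ 2 = γ + 2 + 1 / γ := by simp only [K₁]; field_simp; ring
    rw [this]
    linarith [one_div_pos.mpr hγ]
  have hmixed : 2 * C / K₂ + 2 * (K₁ / K₂) * C' ≤ ε / 8 := by
    rw [← mul_div_assoc, div_mul_eq_mul_div, ← add_div, div_le_iff₀ hK₂pos]
    have : ε / 8 * K₂ = ε / 8 * K₁ + 2 * (C + K₁ * C') := by rw [hK₂]; field_simp; ring
    rw [this]
    linarith [mul_pos hε hK₁pos]
  refine ⟨ε / (2 * K₂ ^ 2), by positivity, ?_⟩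
  intro V _ W EW d hd hsymm hnonneg hdiag hdeg hEW hsparse hcut y hy
  have hQ : 0 ≤ d * ∑ i, y i ^ 2 := mul_nonneg hd (sum_nonneg fun i _ => sq_nonneg _)
  have hconst : K₂ ^ 2 * (ε / (2 * K₂ ^ 2)) + 2 * C / K₂ + (ε / (8 * l) * l + C' / l) +
      2 * (K₁ / K₂) * C' ≤ ε := by
    have h₁ : K₂ ^ 2 * (ε / (2 * K₂ ^ 2)) = ε / 2 := by field_simp
    have h₂ : ε / (8 * l) * l = ε / 8 := by field_simp
    have h₃ : C' / l = ε / 8 := by rw [hl]; field_simp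
    linarith
  have hbound := dotProduct_mulVec_le_of_rms_thresholds hsymm hnonneg hdiag hd hC hC'.le
    (by positivity) hlpos hK₁pos hK hγK hdeg hEW hsparse hcut hy
  linarith [mul_le_mul_of_nonneg_right hconst hQ]

end PseudorandomQuadraticForm

section ThirdEigenvalue

lemma finrank_ker_mulVecLin_of_mul_eq_one {m n : Type*} [Fintype m] [DecidableEq m] [Fintype n]
    {A : Matrix m n ℝ} {B : Matrix n m ℝ} (h : A * B = 1) :
    Module.finrank ℝ (LinearMap.ker A.mulVecLin) = Fintype.card n - Fintype.card m := by
  have hrange : LinearMap.range A.mulVecLin = ⊤ :=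
    LinearMap.range_eq_top.mpr fun v => ⟨B *ᵥ v, by simp [h]⟩
  have hrank := LinearMap.finrank_range_add_finrank_ker A.mulVecLin
  rw [hrange, finrank_top, Module.finrank_fintype_fun_eq_card,
    Module.finrank_fintype_fun_eq_card] at hrank
  omega

lemma exists_forall_dotProduct_mulVec_le {V : Type*} [Fintype V] (A : Matrix V V ℝ) :
    ∃ c, ∀ x, x ⬝ᵥ A *ᵥ x ≤ c * ∑ i, x i ^ 2 := by
  set b := ∑ i, ∑ j, |A i j|
  have hb : 0 ≤ b := by positivity
  have hA : ∀ i j, |A i j| ≤ b := fun i j =>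
    (single_le_sum (fun _ _ => abs_nonneg _) (mem_univ j)).trans
      (single_le_sum (f := fun i => ∑ j, |A i j|) (fun _ _ => by positivity) (mem_univ i))
  refine ⟨b * Fintype.card V, fun x => ?_⟩
  have hsq := sq_sum_le_card_mul_sum_sq (s := univ) (f := fun i => |x i|)
  simp only [sq_abs, card_univ] at hsq
  calc x ⬝ᵥ A *ᵥ x ≤ b * ((∑ i, |x i|) * ∑ i, |x i|) :=
        (le_abs_self _).trans (abs_dotProduct_mulVec_le hA x x)
    _ ≤ b * (Fintype.card V * ∑ i, x i ^ 2) := by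
        rw [← sq]
        exact mul_le_mul_of_nonneg_left hsq hb
    _ = _ := (mul_assoc _ _ _).symm

variable {n : ℕ}

lemma bddAbove_lambda3_set (hn : 3 ≤ n) (M : Matrix (Fin n) (Fin n) ℝ) :
    BddAbove {r : ℝ | ∃ V : Submodule ℝ (Fin n → ℝ), Module.finrank ℝ V = n - 2 ∧
      ∀ x ∈ V, r * (∑ i, x i ^ 2) ≤ x ⬝ᵥ M.mulVec x} := by
  obtain ⟨c, hc⟩ := exists_forall_dotProduct_mulVec_le M
  refine ⟨c, ?_⟩
  rintro r ⟨V, hV, hr⟩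
  have : Nontrivial V := Module.nontrivial_of_finrank_pos (R := ℝ) (by omega)
  obtain ⟨⟨x, hxV⟩, hx⟩ := exists_ne (0 : V)
  obtain ⟨i, hi⟩ : ∃ i, x i ≠ 0 := Function.ne_iff.mp (Subtype.coe_ne_coe.mpr hx)
  have hpos : 0 < ∑ i, x i ^ 2 :=
    sum_pos' (fun _ _ => sq_nonneg _) ⟨i, mem_univ i, by positivity⟩
  exact le_of_mul_le_mul_right ((hr x hxV).trans (hc x)) hpos

lemma sgn_mul_self (σ : Fin n → Bool) : sgn σ * sgn σ = 1 := by
  ext i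
  cases h : σ i <;> simp [sgn, h]

lemma sum_sgn_of_balanced {σ : Fin n → Bool} (hσ : balanced σ) : ∑ i, sgn σ i = 0 := by
  have hcard := card_filter_add_card_filter_not (s := (univ : Finset (Fin n))) (σ · = true)
  simp only [balanced, card_univ, Fintype.card_fin] at hσ hcard
  have heq : #{i | σ i = true} = #{i | ¬ σ i = true} := by omega
  simp only [sgn, sum_ite, sum_const, nsmul_eq_mul, heq]
  ring

/-- The `2 × n` matrix with rows `𝟙` and `σ`, whose kernel is `span{𝟙, σ}ᗮ`. -/
noncomputable def labelRows (σ : Fin n → Bool) : Matrix (Fin 2) (Fin n) ℝ := of ![1, sgn σ]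

lemma labelRows_mulVec_eq_zero_iff (σ : Fin n → Bool) (x : Fin n → ℝ) :
    labelRows σ *ᵥ x = 0 ↔ ∑ i, x i = 0 ∧ ∑ i, sgn σ i * x i = 0 := by
  simp [labelRows, funext_iff, dotProduct]

lemma labelRows_mul_transpose {σ : Fin n → Bool} (hσ : balanced σ) :
    labelRows σ * (labelRows σ)ᵀ = (n : ℝ) • 1 := by
  have hsq : ∀ i, sgn σ i * sgn σ i = 1 := congrFun (sgn_mul_self σ)
  ext a b
  fin_cases a <;> fin_cases b <;>
    simp [labelRows, mul_apply, sum_sgn_of_balanced hσ, hsq]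

lemma PiM_eq_one_sub (σ : Fin n → Bool) :
    PiM σ = 1 - (n : ℝ)⁻¹ • ((labelRows σ)ᵀ * labelRows σ) := by
  ext i j
  simp [PiM, outer, labelRows, mul_apply]
  ring

lemma PiM_transpose (σ : Fin n → Bool) : (PiM σ)ᵀ = PiM σ := by
  simp [PiM_eq_one_sub, transpose_mul]

lemma PiM_mulVec_of_labelRows_mulVec_eq_zero {σ : Fin n → Bool} {x : Fin n → ℝ}
    (hx : labelRows σ *ᵥ x = 0) : PiM σ *ᵥ x = x := by
  rw [PiM_eq_one_sub, sub_mulVec, smul_mulVec, ← mulVec_mulVec, hx]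
  simp

lemma lambda3_pos_of_forall_le {σ : Fin n → Bool} (hn : 3 ≤ n) (hσ : balanced σ)
    {L : Matrix (Fin n) (Fin n) ℝ} {r : ℝ} (hr : 0 < r)
    (hL : ∀ x, labelRows σ *ᵥ x = 0 → r * ∑ i, x i ^ 2 ≤ x ⬝ᵥ L *ᵥ x) :
    0 < lambda3 (PiM σ * L * PiM σ) := by
  have hright : labelRows σ * ((n : ℝ)⁻¹ • (labelRows σ)ᵀ) = 1 := by
    have : (n : ℝ) ≠ 0 := by positivity
    rw [Matrix.mul_smul, labelRows_mul_transpose hσ, inv_smul_smul₀ this]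
  refine hr.trans_le <| le_csSup (bddAbove_lambda3_set hn _)
    ⟨LinearMap.ker (labelRows σ).mulVecLin, ?_, fun x hx => ?_⟩
  · simpa using finrank_ker_mulVecLin_of_mul_eq_one hright
  · have hPi := PiM_mulVec_of_labelRows_mulVec_eq_zero hx
    have hform : x ⬝ᵥ (PiM σ * L * PiM σ) *ᵥ x = x ⬝ᵥ L *ᵥ x := by
      rw [← mulVec_mulVec, hPi, ← mulVec_mulVec, dotProduct_mulVec, ← mulVec_transpose,
        PiM_transpose, hPi]
    rw [hform]
    exact hL x hx

lemma GammaM_apply (σ : Fin n → Bool) (W : Matrix (Fin n) (Fin n) ℝ) (i j : Fin n) :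
    GammaM σ W i j = sgn σ i * sgn σ j * W i j := by
  simp only [GammaM, mul_diagonal, diagonal_mul]
  ring

lemma dotProduct_LGamma_mulVec (σ : Fin n → Bool) (W : Matrix (Fin n) (Fin n) ℝ) (x : Fin n → ℝ) :
    x ⬝ᵥ LGamma σ W *ᵥ x =
      ∑ i, (∑ j, GammaM σ W i j) * x i ^ 2 - (sgn σ * x) ⬝ᵥ W *ᵥ (sgn σ * x) := by
  rw [LGamma, sub_mulVec, dotProduct_sub]
  congr 1
  · simp only [dotProduct, mulVec_diagonal]
    exact sum_congr rfl fun i _ => by ring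
  · simp only [dotProduct_mulVec_eq_sum, GammaM_apply, Pi.mul_apply]
    exact sum_congr rfl fun i _ => sum_congr rfl fun j _ => by ring

lemma lambda3_pos_of_signedDegree {σ : Fin n → Bool} (hn : 3 ≤ n) (hσ : balanced σ)
    {W : Matrix (Fin n) (Fin n) ℝ} {δ r : ℝ} (hr : r < δ) (hdeg : ∀ i, δ ≤ ∑ j, GammaM σ W i j)
    (hW : ∀ y, labelRows σ *ᵥ y = 0 → y ⬝ᵥ W *ᵥ y ≤ r * ∑ i, y i ^ 2) :
    0 < lambda3 (PiM σ * LGamma σ W * PiM σ) := by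
  refine lambda3_pos_of_forall_le hn hσ (sub_pos.mpr hr) fun x hx => ?_
  obtain ⟨hx₁, hx₂⟩ := (labelRows_mulVec_eq_zero_iff σ x).mp hx
  have hsq : ∀ i, sgn σ i * sgn σ i = 1 := congrFun (sgn_mul_self σ)
  have hy : labelRows σ *ᵥ (sgn σ * x) = 0 :=
    (labelRows_mulVec_eq_zero_iff σ _).mpr ⟨hx₂, by simpa [← mul_assoc, hsq] using hx₁⟩
  have hnorm : ∑ i, (sgn σ * x) i ^ 2 = ∑ i, x i ^ 2 :=
    sum_congr rfl fun i _ => by rw [Pi.mul_apply, mul_pow, sq (sgn σ i), hsq, one_mul]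
  have hdiag : δ * ∑ i, x i ^ 2 ≤ ∑ i, (∑ j, GammaM σ W i j) * x i ^ 2 := by
    rw [mul_sum]
    exact sum_le_sum fun i _ => mul_le_mul_of_nonneg_right (hdeg i) (sq_nonneg _)
  have hquad := hW _ hy
  rw [hnorm] at hquad
  rw [dotProduct_LGamma_mulVec]
  linarith

end ThirdEigenvalue

section PairMatrix

variable {V : Type*} [DecidableEq V]

/-- The adjacency matrix of the single hyperedge `e`. -/
noncomputable def pairMatrix (e : Finset V) : Matrix V V ℝ :=
  of fun i j => if i ∈ e ∧ j ∈ e.erase i then 1 else 0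

lemma pairMatrix_apply_of_notMem {e : Finset V} {i : V} (hi : i ∉ e) (j : V) :
    pairMatrix e i j = 0 := by
  simp [pairMatrix, hi]

lemma pairMatrix_apply_of_ne {i j : V} (hij : i ≠ j) (e : Finset V) :
    pairMatrix e i j = if {i, j} ⊆ e then 1 else 0 := by
  simp [pairMatrix, insert_subset_iff, hij.symm]

variable [Fintype V]

lemma dotProduct_pairMatrix_mulVec (e : Finset V) (x y : V → ℝ) :
    x ⬝ᵥ pairMatrix e *ᵥ y = ∑ i ∈ e, x i * ∑ j ∈ e.erase i, y j := by
  simp only [dotProduct_mulVec_eq_sum, pairMatrix, of_apply, ite_and, ite_mul, one_mul, zero_mul,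
    sum_ite_irrel, sum_const_zero, sum_ite_mem, univ_inter, mul_sum]

lemma single_dotProduct_pairMatrix_mulVec_of_notMem {e : Finset V} {i : V} (hi : i ∉ e) (c : ℝ)
    (y : V → ℝ) : Pi.single i c ⬝ᵥ pairMatrix e *ᵥ y = 0 := by
  rw [single_dotProduct]
  simp only [mulVec, dotProduct, pairMatrix_apply_of_notMem hi, zero_mul, sum_const_zero, mul_zero]

lemma single_dotProduct_pairMatrix_mulVec {e : Finset V} {i : V} (hi : i ∈ e) (c : ℝ) (y : V → ℝ) :
    Pi.single i c ⬝ᵥ pairMatrix e *ᵥ y = c * ∑ j ∈ e.erase i, y j := by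
  rw [dotProduct_pairMatrix_mulVec, sum_eq_single_of_mem i hi fun j _ hj => by simp [hj],
    Pi.single_eq_same]

lemma abs_dotProduct_pairMatrix_mulVec_le (e : Finset V) {x y : V → ℝ} (hx : ∀ i, |x i| ≤ 1)
    (hy : ∀ i, |y i| ≤ 1) : |x ⬝ᵥ pairMatrix e *ᵥ y| ≤ 1 ⬝ᵥ pairMatrix e *ᵥ 1 := by
  simp only [dotProduct_pairMatrix_mulVec, mul_sum, Pi.one_apply, one_mul]
  refine (abs_sum_le_sum_abs _ _).trans <| sum_le_sum fun i _ =>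
    (abs_sum_le_sum_abs _ _).trans <| sum_le_sum fun j _ => ?_
  rw [abs_mul]
  exact mul_le_one₀ (hx i) (abs_nonneg _) (hy j)

lemma one_dotProduct_pairMatrix_mulVec_one_le (e : Finset V) :
    1 ⬝ᵥ pairMatrix e *ᵥ 1 ≤ (#e : ℝ) ^ 2 := by
  calc 1 ⬝ᵥ pairMatrix e *ᵥ 1 = ∑ i ∈ e, (#(e.erase i) : ℝ) := by
        simp [dotProduct_pairMatrix_mulVec]
    _ ≤ ∑ _i ∈ e, (#e : ℝ) :=
        sum_le_sum fun i _ => by exact_mod_cast card_le_card (erase_subset i e)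
    _ = (#e : ℝ) ^ 2 := by simp [sq]

end PairMatrix

section RandomHypergraph

variable {n k : ℕ}

lemma Wmat_eq_sum (E : KSet n k → Bool) : Wmat E = ∑ e with E e, pairMatrix e.1 := by
  ext i j
  rw [Matrix.sum_apply]
  rcases eq_or_ne i j with rfl | hij
  · simp [Wmat, pairMatrix]
  · simp only [Wmat, of_apply, if_neg hij, pairMatrix_apply_of_ne hij, sum_boole, filter_filter,
      insert_subset_iff, singleton_subset_iff]

lemma Wmat_isSymm (E : KSet n k → Bool) : (Wmat E).IsSymm := by
  ext i j
  simp only [Wmat, transpose_apply, of_apply, eq_comm (a := j), and_comm (a := j ∈ _)]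

/-- The expected weighted adjacency matrix of the random hypergraph with independent edges of
probabilities `w`. -/
noncomputable def meanAdjacency (w : KSet n k → unitInterval) : Matrix (Fin n) (Fin n) ℝ :=
  ∑ e, (w e : ℝ) • pairMatrix e.1

lemma dotProduct_Wmat_mulVec (E : KSet n k → Bool) (x y : Fin n → ℝ) :
    x ⬝ᵥ Wmat E *ᵥ y = ∑ e with E e, x ⬝ᵥ pairMatrix e.1 *ᵥ y := by
  rw [Wmat_eq_sum, sum_mulVec, dotProduct_sum]

lemma meanAdjacency_apply (w : KSet n k → unitInterval) (i j : Fin n) :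
    meanAdjacency w i j = ∑ e, w e * pairMatrix e.1 i j := by
  simp only [meanAdjacency, Matrix.sum_apply, Matrix.smul_apply, smul_eq_mul]

lemma meanAdjacency_nonneg (w : KSet n k → unitInterval) (i j : Fin n) :
    0 ≤ meanAdjacency w i j := by
  rw [meanAdjacency_apply]
  refine sum_nonneg fun e _ => mul_nonneg (w e).2.1 ?_
  simp only [pairMatrix, of_apply]
  positivity

lemma dotProduct_meanAdjacency_mulVec (w : KSet n k → unitInterval) (x y : Fin n → ℝ) :
    x ⬝ᵥ meanAdjacency w *ᵥ y = ∑ e, w e * (x ⬝ᵥ pairMatrix e.1 *ᵥ y) := by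
  simp only [meanAdjacency, sum_mulVec, dotProduct_sum, smul_mulVec, dotProduct_smul, smul_eq_mul]

lemma chernoff_dotProduct_Wmat (w : KSet n k → unitInterval) (x y : Fin n → ℝ) (t : ℝ) :
    (bernoulliPi w).real {E | t ≤ x ⬝ᵥ Wmat E *ᵥ y} ≤
      Real.exp (-t + ∑ e, w e * (Real.exp (x ⬝ᵥ pairMatrix e.1 *ᵥ y) - 1)) := by
  simp only [dotProduct_Wmat_mulVec]
  exact chernoff_bernoulliPi w _ t

lemma exp_sub_one_le_mul_exp {a R : ℝ} (ha : 0 ≤ a) (haR : a ≤ R) :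
    Real.exp a - 1 ≤ Real.exp R * a := by
  have h : 1 - a ≤ Real.exp (-a) := by linarith [Real.add_one_le_exp (-a)]
  have h' := mul_le_mul_of_nonneg_left h (Real.exp_pos a).le
  rw [← Real.exp_add, add_neg_cancel, Real.exp_zero] at h'
  have := mul_le_mul_of_nonneg_right (Real.exp_le_exp.mpr haR) ha
  linarith

lemma upperTail_dotProduct_Wmat (w : KSet n k → unitInterval) {x y : Fin n → ℝ}
    (hx : ∀ i, x i ∈ Set.Icc (0 : ℝ) 1) (hy : ∀ i, y i ∈ Set.Icc (0 : ℝ) 1) {θ : ℝ} (hθ : 0 ≤ θ)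
    (t : ℝ) :
    (bernoulliPi w).real {E | t ≤ x ⬝ᵥ Wmat E *ᵥ y} ≤
      Real.exp (-(θ * t) + θ * Real.exp (θ * k ^ 2) * (x ⬝ᵥ meanAdjacency w *ᵥ y)) := by
  set a : KSet n k → ℝ := fun e => x ⬝ᵥ pairMatrix e.1 *ᵥ y
  have ha₀ : ∀ e, 0 ≤ a e := fun e => by
    simp only [a, dotProduct_pairMatrix_mulVec]
    exact sum_nonneg fun i _ => mul_nonneg (hx i).1 (sum_nonneg fun j _ => (hy j).1)
  have ha₁ : ∀ e, a e ≤ (k : ℝ) ^ 2 := fun e => by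
    have := one_dotProduct_pairMatrix_mulVec_one_le e.1
    rw [e.2] at this
    exact (le_abs_self _).trans <| (abs_dotProduct_pairMatrix_mulVec_le e.1
      (fun i => abs_le.mpr ⟨by linarith [(hx i).1], (hx i).2⟩)
      (fun i => abs_le.mpr ⟨by linarith [(hy i).1], (hy i).2⟩)).trans this
  calc (bernoulliPi w).real {E | t ≤ x ⬝ᵥ Wmat E *ᵥ y}
      ≤ (bernoulliPi w).real {E | θ * t ≤ (θ • x) ⬝ᵥ Wmat E *ᵥ y} :=
        measureReal_mono fun E hE => by
          simpa only [Set.mem_ofPred_eq, smul_dotProduct, smul_eq_mul]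
            using mul_le_mul_of_nonneg_left hE hθ
    _ ≤ Real.exp (-(θ * t) + ∑ e, w e * (Real.exp (θ * a e) - 1)) := by
        simpa only [smul_dotProduct, smul_eq_mul] using chernoff_dotProduct_Wmat w (θ • x) y (θ * t)
    _ ≤ _ := by
        rw [dotProduct_meanAdjacency_mulVec, mul_sum]
        refine Real.exp_le_exp.mpr (add_le_add le_rfl (sum_le_sum fun e _ => ?_))
        calc w e * (Real.exp (θ * a e) - 1) ≤ w e * (Real.exp (θ * k ^ 2) * (θ * a e)) :=
              mul_le_mul_of_nonneg_left (exp_sub_one_le_mul_exp (mul_nonneg hθ (ha₀ e))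
                (mul_le_mul_of_nonneg_left (ha₁ e) hθ)) (w e).2.1
          _ = _ := by ring

lemma bernstein_dotProduct_Wmat_sub (w : KSet n k → unitInterval) {x y : Fin n → ℝ}
    (hx : ∀ i, |x i| ≤ 1) (hy : ∀ i, |y i| ≤ 1) {θ : ℝ} (hθ : 0 ≤ θ) (hθk : θ * k ^ 2 ≤ 1)
    (t : ℝ) :
    (bernoulliPi w).real {E | t ≤ x ⬝ᵥ (Wmat E - meanAdjacency w) *ᵥ y} ≤
      Real.exp (-(θ * t) + θ ^ 2 * k ^ 2 * (1 ⬝ᵥ meanAdjacency w *ᵥ 1)) := by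
  set a : KSet n k → ℝ := fun e => x ⬝ᵥ pairMatrix e.1 *ᵥ y
  set u : KSet n k → ℝ := fun e => 1 ⬝ᵥ pairMatrix e.1 *ᵥ 1
  have hau : ∀ e, |a e| ≤ u e := fun e => abs_dotProduct_pairMatrix_mulVec_le e.1 hx hy
  have huk : ∀ e, u e ≤ (k : ℝ) ^ 2 := fun e => by
    have := one_dotProduct_pairMatrix_mulVec_one_le e.1
    rwa [e.2] at this
  have hexp : ∀ e, Real.exp (θ * a e) - 1 ≤ θ * a e + θ ^ 2 * k ^ 2 * u e := fun e => by
    have hθa : |θ * a e| ≤ 1 := by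
      rw [abs_mul, abs_of_nonneg hθ]
      exact (mul_le_mul_of_nonneg_left ((hau e).trans (huk e)) hθ).trans hθk
    have hsq : a e ^ 2 ≤ k ^ 2 * u e := by
      rw [← sq_abs, sq]
      exact mul_le_mul ((hau e).trans (huk e)) (hau e) (abs_nonneg _) (by positivity)
    have := (abs_le.mp (Real.abs_exp_sub_one_sub_id_le hθa)).2
    linarith [mul_le_mul_of_nonneg_left hsq (sq_nonneg θ), mul_pow θ (a e) 2]
  calc (bernoulliPi w).real {E | t ≤ x ⬝ᵥ (Wmat E - meanAdjacency w) *ᵥ y}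
      ≤ (bernoulliPi w).real {E | θ * t + ∑ e, w e * (θ * a e) ≤ (θ • x) ⬝ᵥ Wmat E *ᵥ y} :=
        measureReal_mono fun E hE => by
          have := mul_le_mul_of_nonneg_left hE hθ
          rw [sub_mulVec, dotProduct_sub, dotProduct_meanAdjacency_mulVec] at this
          simp only [Set.mem_ofPred_eq, smul_dotProduct, smul_eq_mul, mul_left_comm _ θ, ← mul_sum]
          linarith
    _ ≤ Real.exp (-(θ * t + ∑ e, w e * (θ * a e)) + ∑ e, w e * (Real.exp (θ * a e) - 1)) := by
        simpa only [smul_dotProduct, smul_eq_mul] using chernoff_dotProduct_Wmat w (θ • x) y _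
    _ ≤ _ := by
        have := sum_le_sum fun e (_ : e ∈ univ) => mul_le_mul_of_nonneg_left (hexp e) (w e).2.1
        simp only [mul_add, sum_add_distrib, mul_left_comm _ (θ ^ 2 * (k : ℝ) ^ 2), ← mul_sum]
          at this
        rw [dotProduct_meanAdjacency_mulVec]
        exact Real.exp_le_exp.mpr (by linarith)

end RandomHypergraph

section Concentration

variable {n k : ℕ} {w : KSet n k → unitInterval} {C d : ℝ}

lemma indicator_one_mem_Icc {V : Type*} (S : Set V) (i : V) :
    S.indicator (1 : V → ℝ) i ∈ Set.Icc (0 : ℝ) 1 := by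
  by_cases hi : i ∈ S <;> simp [hi]

lemma measureReal_not_forall_degree_le (hw : ∀ i j, |meanAdjacency w i j| ≤ C * d / n) (t : ℝ) :
    (bernoulliPi w).real {E | ¬ ∀ i, ∑ j, Wmat E i j ≤ t} ≤
      n * Real.exp (-t + Real.exp (k ^ 2) * (C * d)) := by
  have hrow : ∀ i, (bernoulliPi w).real {E | t ≤ Pi.single i 1 ⬝ᵥ Wmat E *ᵥ 1} ≤
      Real.exp (-t + Real.exp (k ^ 2) * (C * d)) := fun i => by
    have hn : (n : ℝ) ≠ 0 := by exact_mod_cast i.pos.ne'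
    have hmean := (le_abs_self _).trans (abs_dotProduct_mulVec_le hw (Pi.single i 1) 1)
    have htail := upperTail_dotProduct_Wmat w (x := Pi.single i 1) (y := 1)
      (fun j => by rcases eq_or_ne j i with rfl | hj <;> simp [*]) (fun _ => by simp)
      zero_le_one t
    simp only [Pi.one_apply, one_mul, abs_one, sum_const, card_univ, Fintype.card_fin,
      nsmul_eq_mul, mul_one, Pi.apply_single (fun _ => abs) (fun _ => abs_zero), sum_pi_single',
      mem_univ, if_true, div_mul_cancel₀ _ hn] at hmean htail
    refine htail.trans (Real.exp_le_exp.mpr ?_)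
    gcongr
  calc (bernoulliPi w).real {E | ¬ ∀ i, ∑ j, Wmat E i j ≤ t}
      ≤ (bernoulliPi w).real (⋃ i, {E | t ≤ Pi.single i 1 ⬝ᵥ Wmat E *ᵥ 1}) :=
        measureReal_mono fun E hE => by
          simp only [Set.mem_ofPred_eq, not_forall, not_le] at hE
          simpa [mulVec, dotProduct_one] using hE.imp fun _ => le_of_lt
    _ ≤ ∑ i, (bernoulliPi w).real {E | t ≤ Pi.single i 1 ⬝ᵥ Wmat E *ᵥ 1} :=
        measureReal_iUnion_fintype_le _
    _ ≤ _ := (sum_le_sum fun i _ => hrow i).trans (by simp)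

lemma sum_erase_empty_pow_card (V : Type*) [Fintype V] [DecidableEq V] (r : ℝ) :
    ∑ S ∈ (univ : Finset (Finset V)).erase ∅, r ^ #S = (1 + r) ^ Fintype.card V - 1 := by
  have h := prod_one_add (f := fun _ : V => r) univ
  rw [powerset_univ, ← add_sum_erase _ _ (mem_univ ∅)] at h
  simp only [prod_const, card_univ, card_empty, pow_zero] at h
  linarith

lemma measureReal_le_dotProduct_indicator_le (hC : 0 ≤ C) (hd : 0 ≤ d)
    (hw : ∀ i j, |meanAdjacency w i j| ≤ C * d / n) {γ h θ : ℝ} (hθ : 0 ≤ θ)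
    (hgap : 2 ≤ θ * (h - Real.exp (θ * k ^ 2) * C * γ)) {S : Finset (Fin n)}
    (hS : (#S : ℝ) ≤ γ * n) :
    (bernoulliPi w).real {E | h * d * #S ≤
      (S : Set (Fin n)).indicator 1 ⬝ᵥ Wmat E *ᵥ (S : Set (Fin n)).indicator 1} ≤
        Real.exp (-2 * d) ^ #S := by
  rcases S.eq_empty_or_nonempty with rfl | ⟨i, -⟩
  · simp
  have hn : (0 : ℝ) < n := by exact_mod_cast i.pos
  set x : Fin n → ℝ := (S : Set (Fin n)).indicator 1
  have hx : ∀ i, x i ∈ Set.Icc (0 : ℝ) 1 := indicator_one_mem_Icc _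
  have hsum : ∑ i, |x i| = #S := by
    simp [x, Set.indicator_apply, apply_ite abs]
  have hmean : x ⬝ᵥ meanAdjacency w *ᵥ x ≤ C * γ * (d * #S) := by
    calc x ⬝ᵥ meanAdjacency w *ᵥ x ≤ C * d / n * (#S * #S) := by
          simpa only [hsum] using (le_abs_self _).trans (abs_dotProduct_mulVec_le hw x x)
      _ = C * d * #S * (#S / n) := by ring
      _ ≤ C * d * #S * γ := by gcongr; exact (div_le_iff₀ hn).mpr hS
      _ = _ := by ring
  refine (upperTail_dotProduct_Wmat w hx hx hθ _).trans ?_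
  rw [← Real.exp_nat_mul, Real.exp_le_exp]
  have h₁ := mul_le_mul_of_nonneg_left hmean (by positivity : 0 ≤ θ * Real.exp (θ * k ^ 2))
  have h₂ := mul_le_mul_of_nonneg_right hgap (by positivity : 0 ≤ d * #S)
  linarith

lemma measureReal_not_isLocallySparse_le (hC : 0 ≤ C) (hd : 0 ≤ d)
    (hw : ∀ i j, |meanAdjacency w i j| ≤ C * d / n) {γ h θ : ℝ} (hθ : 0 ≤ θ)
    (hgap : 2 ≤ θ * (h - Real.exp (θ * k ^ 2) * C * γ)) :
    (bernoulliPi w).real {E | ¬ IsLocallySparse (Wmat E) γ (h * d)} ≤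
      (1 + Real.exp (-2 * d)) ^ n - 1 := by
  set Q : Finset (Fin n) → Set (KSet n k → Bool) := fun S => {E | h * d * #S ≤
    (S : Set (Fin n)).indicator 1 ⬝ᵥ Wmat E *ᵥ (S : Set (Fin n)).indicator 1}
  set 𝒮 : Finset (Finset (Fin n)) := {S ∈ univ.erase ∅ | (#S : ℝ) ≤ γ * n}
  have hform : ∀ (S : Finset (Fin n)) (A : Matrix (Fin n) (Fin n) ℝ),
      (S : Set (Fin n)).indicator 1 ⬝ᵥ A *ᵥ (S : Set (Fin n)).indicator 1 =
        ∑ i ∈ S, ∑ j ∈ S, A i j := fun S A => by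
    simp [dotProduct_mulVec_eq_sum, Set.indicator_apply, sum_ite_irrel]
  calc (bernoulliPi w).real {E | ¬ IsLocallySparse (Wmat E) γ (h * d)}
      ≤ (bernoulliPi w).real (⋃ S ∈ 𝒮, Q S) :=
        measureReal_mono (fun E hE => by
          simp only [IsLocallySparse, Set.mem_ofPred_eq, not_forall, not_le,
            Fintype.card_fin] at hE
          obtain ⟨S, hS, hlt⟩ := hE
          have hne : S ≠ ∅ := by rintro rfl; simp at hlt
          simp only [𝒮, Set.mem_iUnion, mem_filter, mem_erase, mem_univ, and_true]
          exact ⟨S, ⟨hne, hS⟩, by simpa only [Q, Set.mem_ofPred_eq, hform] using hlt.le⟩)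
          (measure_ne_top _ _)
    _ ≤ ∑ S ∈ 𝒮, (bernoulliPi w).real (Q S) :=
        measureReal_biUnion_finset_le _ _
    _ ≤ ∑ S ∈ 𝒮, Real.exp (-2 * d) ^ #S :=
        sum_le_sum fun S hS => measureReal_le_dotProduct_indicator_le hC hd hw hθ hgap
          (mem_filter.mp hS).2
    _ ≤ ∑ S ∈ univ.erase ∅, Real.exp (-2 * d) ^ #S :=
        sum_le_sum_of_subset_of_nonneg (filter_subset _ _) fun _ _ _ => by positivity
    _ = _ := by rw [sum_erase_empty_pow_card, Fintype.card_fin]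

lemma measureReal_not_cutNormLE_le (hw : ∀ i j, |meanAdjacency w i j| ≤ C * d / n) {η θ : ℝ}
    (hθ : 0 ≤ θ) (hθk : θ * k ^ 2 ≤ 1) :
    (bernoulliPi w).real {E | ¬ CutNormLE (Wmat E - meanAdjacency w) (η * d * n)} ≤
      Real.exp (n * (Real.log 9 - θ * (η - θ * k ^ 2 * C) * d)) := by
  set Q : (Fin n → SignType) × (Fin n → SignType) → Set (KSet n k → Bool) := fun p =>
    {E | η * d * n ≤ (fun i => (p.1 i : ℝ)) ⬝ᵥ (Wmat E - meanAdjacency w) *ᵥ fun j => (p.2 j : ℝ)}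
  have hsign : ∀ (s : Fin n → SignType) (i : Fin n), |(s i : ℝ)| ≤ 1 := fun s i => by
    cases s i <;> simp
  have hmean : 1 ⬝ᵥ meanAdjacency w *ᵥ 1 ≤ C * d * n := by
    have := (le_abs_self _).trans (abs_dotProduct_mulVec_le hw 1 1)
    rcases eq_or_ne (n : ℝ) 0 with hn | hn
    · simpa [hn] using this
    · refine this.trans_eq ?_
      simp
      field_simp
  have hQ : ∀ p, (bernoulliPi w).real (Q p) ≤ Real.exp (n * -(θ * (η - θ * k ^ 2 * C) * d)) :=
    fun p => by
      refine (bernstein_dotProduct_Wmat_sub w (hsign p.1) (hsign p.2) hθ hθk _).trans ?_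
      have := mul_le_mul_of_nonneg_left hmean (by positivity : 0 ≤ θ ^ 2 * (k : ℝ) ^ 2)
      exact Real.exp_le_exp.mpr (by linarith)
  calc (bernoulliPi w).real {E | ¬ CutNormLE (Wmat E - meanAdjacency w) (η * d * n)}
      ≤ (bernoulliPi w).real (⋃ p, Q p) :=
        measureReal_mono fun E hE => by
          simp only [CutNormLE, Set.mem_ofPred_eq, not_forall, not_le] at hE
          obtain ⟨s, r, hlt⟩ := hE
          exact Set.mem_iUnion.mpr ⟨(s, r), hlt.le⟩
    _ ≤ ∑ p, (bernoulliPi w).real (Q p) := measureReal_iUnion_fintype_le _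
    _ ≤ 9 ^ n * Real.exp (n * -(θ * (η - θ * k ^ 2 * C) * d)) := by
        refine (sum_le_sum fun p _ => hQ p).trans_eq ?_
        have : Fintype.card SignType = 3 := rfl
        simp only [sum_const, card_univ, Fintype.card_prod, Fintype.card_pi_const, this,
          nsmul_eq_mul, Nat.cast_mul, Nat.cast_pow, ← mul_pow]
        norm_num
    _ = Real.exp (n * Real.log 9) * Real.exp (n * -(θ * (η - θ * k ^ 2 * C) * d)) := by
        rw [Real.exp_nat_mul (Real.log 9), Real.exp_log (by norm_num)]
    _ = _ := by rw [← Real.exp_add, ← mul_add, ← sub_eq_add_neg]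

end Concentration

section PowersetCard

variable {V : Type*} [DecidableEq V]

lemma sum_filter_mem_powersetCard {M : Type*} [AddCommMonoid M] {S : Finset V} {i : V}
    (hi : i ∈ S) (K : ℕ) (f : Finset V → M) :
    ∑ e ∈ powersetCard (K + 1) S with i ∈ e, f e =
      ∑ T ∈ powersetCard K (S.erase i), f (insert i T) := by
  refine sum_nbij' (fun e => e.erase i) (insert i) ?_ ?_ ?_ ?_ ?_
  · intro e he
    obtain ⟨he, hie⟩ := mem_filter.mp he
    obtain ⟨hsub, hcard⟩ := mem_powersetCard.mp he
    exact mem_powersetCard.mpr ⟨erase_subset_erase i hsub, by simp [card_erase_of_mem hie, hcard]⟩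
  · intro T hT
    obtain ⟨hsub, hcard⟩ := mem_powersetCard.mp hT
    have hiT : i ∉ T := fun h => notMem_erase i S (hsub h)
    exact mem_filter.mpr ⟨mem_powersetCard.mpr
      ⟨insert_subset hi (hsub.trans (erase_subset i S)), by rw [card_insert_of_notMem hiT, hcard]⟩,
      mem_insert_self i T⟩
  · exact fun e he => insert_erase (mem_filter.mp he).2
  · exact fun T hT => erase_insert fun h => notMem_erase i S ((mem_powersetCard.mp hT).1 h)
  · exact fun e he => by rw [insert_erase (mem_filter.mp he).2]

omit [DecidableEq V] in
lemma esymm_le_sum_pow_div_factorial (s : Multiset ℝ) (hs : ∀ x ∈ s, 0 ≤ x) (K : ℕ) :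
    s.esymm K ≤ s.sum ^ K / K.factorial := by
  induction s using Multiset.induction_on generalizing K with
  | empty => cases K <;> simp [Multiset.esymm, Multiset.powersetCard_zero_right]
  | cons a s ih =>
    have ha := hs a (Multiset.mem_cons_self a s)
    have hs' : ∀ x ∈ s, 0 ≤ x := fun x hx => hs x (Multiset.mem_cons_of_mem hx)
    have hsum := Multiset.sum_nonneg hs'
    rcases K with _ | K
    · simp [Multiset.esymm]
    have hcons : (a ::ₘ s).esymm (K + 1) = s.esymm (K + 1) + a * s.esymm K := by
      simp [Multiset.esymm, Multiset.powersetCard_cons, Multiset.sum_map_mul_left]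
    have hpow : s.sum ^ (K + 1) + (K + 1) * s.sum ^ K * a ≤ (a + s.sum) ^ (K + 1) := by
      simpa [add_comm a, mul_comm, mul_left_comm, mul_assoc] using
        pow_add_mul_le_add_pow hsum (by positivity) (K + 1)
    calc (a ::ₘ s).esymm (K + 1)
        ≤ s.sum ^ (K + 1) / (K + 1).factorial + a * (s.sum ^ K / K.factorial) := by
          rw [hcons]
          gcongr
          exacts [ih hs' _, ih hs' _]
      _ = (s.sum ^ (K + 1) + (K + 1) * s.sum ^ K * a) / (K + 1).factorial := by
          rw [Nat.factorial_succ]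
          push_cast
          field_simp
      _ ≤ (a ::ₘ s).sum ^ (K + 1) / (K + 1).factorial := by
          rw [Multiset.sum_cons]
          gcongr

end PowersetCard

section PlantedPartition

variable {n k : ℕ} {p q : ℝ} {σ : Fin n → Bool}

/-- The community of the vertex `i` under the labelling `σ`. -/
def cluster (σ : Fin n → Bool) (i : Fin n) : Finset (Fin n) := {j | σ j = σ i}

lemma mem_cluster {i j : Fin n} : j ∈ cluster σ i ↔ σ j = σ i := by simp [cluster]

lemma card_cluster_of_balanced (hσ : balanced σ) (i : Fin n) : #(cluster σ i) = n / 2 := by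
  have htrue : #{j | σ j = true} = n / 2 := by unfold balanced at hσ; omega
  have hsplit := card_filter_add_card_filter_not (s := univ) fun j => σ j = true
  rw [card_univ, Fintype.card_fin] at hsplit
  simp only [Bool.not_eq_true] at hsplit
  unfold cluster balanced at *
  cases σ i <;> omega

lemma sgn_mul_sgn (σ : Fin n → Bool) (i j : Fin n) :
    sgn σ i * sgn σ j = if σ i = σ j then 1 else -1 := by
  cases hi : σ i <;> cases hj : σ j <;> simp [sgn, hi, hj]

lemma sum_KSet (f : Finset (Fin n) → ℝ) :
    ∑ e : KSet n k, f e.1 = ∑ e ∈ powersetCard k univ, f e :=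
  (sum_subtype _ (fun e => by simp [mem_powersetCard]) f).symm

lemma sum_edgeP_mul (i : Fin n) {F : Finset (Fin n) → ℝ} (hF : ∀ e, i ∉ e → F e = 0) :
    ∑ e : KSet n k, edgeP p q σ e.1 * F e.1 =
      q * ∑ e ∈ powersetCard k univ, F e + (p - q) * ∑ e ∈ powersetCard k (cluster σ i), F e := by
  have hcluster : ∑ e ∈ powersetCard k (cluster σ i), F e =
      ∑ e ∈ powersetCard k univ, if inCluster σ e then F e else 0 := by
    rw [← sum_filter]
    refine sum_subset_zero_on_sdiff (fun e he => ?_) (fun e he => hF e fun hi => ?_) fun _ _ => rfl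
    · obtain ⟨hsub, hcard⟩ := mem_powersetCard.mp he
      refine mem_filter.mpr ⟨mem_powersetCard.mpr ⟨subset_univ e, hcard⟩, fun a ha b hb => ?_⟩
      rw [mem_cluster.mp (hsub ha), mem_cluster.mp (hsub hb)]
    · obtain ⟨he, hne⟩ := mem_sdiff.mp he
      obtain ⟨he, hin⟩ := mem_filter.mp he
      exact hne (mem_powersetCard.mpr
        ⟨fun a ha => mem_cluster.mpr (hin a ha i hi), (mem_powersetCard.mp he).2⟩)
  rw [sum_KSet fun e => edgeP p q σ e * F e, hcluster, mul_sum, mul_sum, ← sum_add_distrib]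
  refine sum_congr rfl fun e _ => ?_
  unfold edgeP
  split_ifs <;> ring

lemma sum_powersetCard_pairMatrix (hk : 2 ≤ k) {S : Finset (Fin n)} {i j : Fin n} (hij : i ≠ j)
    (hi : i ∈ S) :
    ∑ e ∈ powersetCard k S, pairMatrix e i j =
      if j ∈ S then ((#S - 2).choose (k - 2) : ℝ) else 0 := by
  simp only [pairMatrix_apply_of_ne hij, sum_boole]
  split_ifs with hj
  · rw [card_filter_powersetCard_subset _ _ _ (insert_subset hi (singleton_subset_iff.mpr hj))
      (by rwa [card_pair hij]), card_pair hij]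
  · rw [filter_false_of_mem, card_empty, Nat.cast_zero]
    exact fun e he hsub => hj ((mem_powersetCard.mp he).1 (hsub (by simp)))

lemma abs_meanAdjacency_apply_le (hk : 2 ≤ k) {w : KSet n k → unitInterval} (hp : 0 ≤ p)
    (hw : ∀ e, (w e : ℝ) ≤ p) (i j : Fin n) :
    |meanAdjacency w i j| ≤ p * ((n - 2).choose (k - 2) : ℝ) := by
  rw [abs_of_nonneg (meanAdjacency_nonneg w i j), meanAdjacency_apply]
  rcases eq_or_ne i j with rfl | hij
  · simpa [pairMatrix] using by positivity
  calc ∑ e, w e * pairMatrix e.1 i j ≤ ∑ e : KSet n k, p * pairMatrix e.1 i j := by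
        refine sum_le_sum fun e _ => mul_le_mul_of_nonneg_right (hw e) ?_
        simp only [pairMatrix, of_apply]
        positivity
    _ = _ := by
        rw [← mul_sum, sum_KSet fun e => pairMatrix e i j,
          sum_powersetCard_pairMatrix hk hij (mem_univ i), if_pos (mem_univ j), card_univ,
          Fintype.card_fin]

lemma meanAdjacency_eq (hk : 2 ≤ k) (hσ : balanced σ) {w : KSet n k → unitInterval}
    (hw : ∀ e, (w e : ℝ) = edgeP p q σ e.1) {a b : ℝ} (ha : a = q * ((n - 2).choose (k - 2) : ℝ))
    (hb : b = (p - q) * ((n / 2 - 2).choose (k - 2) : ℝ)) :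
    meanAdjacency w = (a + b / 2) • vecMulVec 1 1 + (b / 2) • vecMulVec (sgn σ) (sgn σ) -
      (a + b) • 1 := by
  ext i j
  simp only [meanAdjacency_apply, Matrix.sub_apply, Matrix.add_apply, Matrix.smul_apply,
    vecMulVec_apply, Pi.one_apply, sgn_mul_sgn, smul_eq_mul]
  rcases eq_or_ne i j with rfl | hij
  · simp only [pairMatrix, of_apply, notMem_erase, and_false, if_false, mul_zero, sum_const_zero,
      if_true, one_apply_eq]
    ring
  simp only [hw]
  rw [sum_edgeP_mul i fun e he => pairMatrix_apply_of_notMem he j,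
    sum_powersetCard_pairMatrix hk hij (mem_univ i), if_pos (mem_univ j),
    sum_powersetCard_pairMatrix hk hij (mem_cluster.mpr rfl), card_cluster_of_balanced hσ,
    card_univ, Fintype.card_fin, one_apply_ne hij, ha, hb]
  simp only [mem_cluster, eq_comm (a := σ j)]
  split_ifs <;> ring

lemma dotProduct_meanAdjacency_mulVec_nonpos (hk : 2 ≤ k) (hσ : balanced σ)
    {w : KSet n k → unitInterval} (hw : ∀ e, (w e : ℝ) = edgeP p q σ e.1) (hq : 0 ≤ q)
    (hqp : q ≤ p) {y : Fin n → ℝ} (hy : labelRows σ *ᵥ y = 0) :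
    y ⬝ᵥ meanAdjacency w *ᵥ y ≤ 0 := by
  obtain ⟨hy₁, hy₂⟩ := (labelRows_mulVec_eq_zero_iff σ y).mp hy
  rw [← one_dotProduct] at hy₁
  have hab : 0 ≤ q * ((n - 2).choose (k - 2) : ℝ) + (p - q) * ((n / 2 - 2).choose (k - 2) : ℝ) := by
    have := sub_nonneg.mpr hqp
    positivity
  rw [meanAdjacency_eq hk hσ hw rfl rfl, sub_mulVec, add_mulVec, smul_mulVec, smul_mulVec,
    vecMulVec_mulVec, vecMulVec_mulVec, hy₁, show sgn σ ⬝ᵥ y = 0 from hy₂, smul_mulVec, one_mulVec]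
  have hyy : 0 ≤ y ⬝ᵥ y := sum_nonneg fun i _ => mul_self_nonneg (y i)
  simpa using mul_nonneg hab hyy

lemma signedDegree_eq (σ : Fin n → Bool) (W : Matrix (Fin n) (Fin n) ℝ) (i : Fin n) :
    ∑ j, GammaM σ W i j = Pi.single i (sgn σ i) ⬝ᵥ W *ᵥ sgn σ := by
  rw [single_dotProduct]
  simp only [GammaM_apply, mulVec, dotProduct, mul_sum]
  exact sum_congr rfl fun j _ => by ring

lemma sum_exp_neg_mul_sgn (hσ : balanced σ) (θ : ℝ) (i : Fin n) :
    ∑ j, Real.exp (-θ * sgn σ i * sgn σ j) = n * Real.cosh θ := by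
  have hj : ∀ j, Real.exp (-θ * sgn σ i * sgn σ j) =
      Real.cosh θ - Real.sinh θ * sgn σ i * sgn σ j := fun j => by
    rw [mul_assoc, mul_assoc, sgn_mul_sgn]
    split_ifs <;> simp [Real.cosh_sub_sinh, Real.cosh_add_sinh]
  simp only [hj, sum_sub_distrib, ← mul_sum, sum_sgn_of_balanced hσ]
  simp

lemma sum_exp_single_dotProduct_pairMatrix_le (hσ : balanced σ) (θ : ℝ) (i : Fin n) (K : ℕ) :
    ∑ e ∈ powersetCard (K + 1) univ,
        (Real.exp (Pi.single i (-θ * sgn σ i) ⬝ᵥ pairMatrix e *ᵥ sgn σ) - 1) ≤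
      (n * Real.cosh θ) ^ K / K.factorial - ((n - 1).choose K : ℝ) := by
  set z : Fin n → ℝ := fun j => Real.exp (-θ * sgn σ i * sgn σ j)
  have hT : ∀ T ∈ powersetCard K (univ.erase i),
      Real.exp (Pi.single i (-θ * sgn σ i) ⬝ᵥ pairMatrix (insert i T) *ᵥ sgn σ) = ∏ j ∈ T, z j :=
    fun T hT => by
      have hiT : i ∉ T := fun h => notMem_erase i _ ((mem_powersetCard.mp hT).1 h)
      rw [single_dotProduct_pairMatrix_mulVec (mem_insert_self i T), erase_insert hiT, mul_sum,
        Real.exp_sum]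
  calc ∑ e ∈ powersetCard (K + 1) univ,
        (Real.exp (Pi.single i (-θ * sgn σ i) ⬝ᵥ pairMatrix e *ᵥ sgn σ) - 1)
      = ∑ e ∈ powersetCard (K + 1) univ with i ∈ e,
          (Real.exp (Pi.single i (-θ * sgn σ i) ⬝ᵥ pairMatrix e *ᵥ sgn σ) - 1) := by
        refine (sum_filter_of_ne fun e _ hne => ?_).symm
        contrapose! hne
        rw [single_dotProduct_pairMatrix_mulVec_of_notMem hne, Real.exp_zero, sub_self]
    _ = ∑ T ∈ powersetCard K (univ.erase i), ∏ j ∈ T, z j - ((n - 1).choose K : ℝ) := by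
        rw [sum_filter_mem_powersetCard (mem_univ i), sum_sub_distrib, sum_congr rfl hT]
        simp
    _ ≤ (∑ j ∈ univ.erase i, z j) ^ K / K.factorial - ((n - 1).choose K : ℝ) := by
        rw [← esymm_map_val]
        gcongr
        exact esymm_le_sum_pow_div_factorial _ (by simp [z, Real.exp_nonneg]) K
    _ ≤ _ := by
        rw [← sum_exp_neg_mul_sgn hσ θ i]
        gcongr
        exact erase_subset i univ

lemma sum_cluster_exp_single_dotProduct_pairMatrix (hσ : balanced σ) (θ : ℝ) (i : Fin n) (K : ℕ) :
    ∑ e ∈ powersetCard (K + 1) (cluster σ i),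
        (Real.exp (Pi.single i (-θ * sgn σ i) ⬝ᵥ pairMatrix e *ᵥ sgn σ) - 1) =
      ((n / 2 - 1).choose K : ℝ) * (Real.exp (-θ * K) - 1) := by
  have hi : i ∈ cluster σ i := mem_cluster.mpr rfl
  have hT : ∀ T ∈ powersetCard K ((cluster σ i).erase i),
      Real.exp (Pi.single i (-θ * sgn σ i) ⬝ᵥ pairMatrix (insert i T) *ᵥ sgn σ) - 1 =
        Real.exp (-θ * K) - 1 := fun T hT => by
    obtain ⟨hsub, hcard⟩ := mem_powersetCard.mp hT
    have hj : ∀ j ∈ T, -θ * sgn σ i * sgn σ j = -θ := fun j hj => by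
      rw [mul_assoc, sgn_mul_sgn, if_pos (mem_cluster.mp (mem_of_mem_erase (hsub hj))).symm,
        mul_one]
    rw [single_dotProduct_pairMatrix_mulVec (mem_insert_self i T),
      erase_insert fun h => notMem_erase i _ (hsub h), mul_sum, sum_congr rfl hj, sum_const, hcard,
      nsmul_eq_mul, mul_comm]
  have hmem : ∀ e ∈ powersetCard (K + 1) (cluster σ i), i ∉ e →
      Real.exp (Pi.single i (-θ * sgn σ i) ⬝ᵥ pairMatrix e *ᵥ sgn σ) - 1 = 0 := fun e _ he => by
    rw [single_dotProduct_pairMatrix_mulVec_of_notMem he, Real.exp_zero, sub_self]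
  rw [← sum_filter_of_ne fun e he hne => not_imp_comm.mp (hmem e he) hne,
    sum_filter_mem_powersetCard hi, sum_congr rfl hT, sum_const, card_powersetCard,
    card_erase_of_mem hi, card_cluster_of_balanced hσ, nsmul_eq_mul]

lemma measureReal_not_forall_signedDegree_le {K : ℕ} {w : KSet n (K + 1) → unitInterval}
    (hσ : balanced σ) (hw : ∀ e, (w e : ℝ) = edgeP p q σ e.1) (hq : 0 ≤ q) {θ : ℝ} (hθ : 0 ≤ θ)
    (t : ℝ) :
    (bernoulliPi w).real {E | ¬ ∀ i, t ≤ ∑ j, GammaM σ (Wmat E) i j} ≤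
      n * Real.exp (θ * t +
        (q * ((n * Real.cosh θ) ^ K / K.factorial - ((n - 1).choose K : ℝ)) +
          (p - q) * (((n / 2 - 1).choose K : ℝ) * (Real.exp (-θ * K) - 1)))) := by
  have hrow : ∀ i, (bernoulliPi w).real
      {E | -θ * t ≤ Pi.single i (-θ * sgn σ i) ⬝ᵥ Wmat E *ᵥ sgn σ} ≤ Real.exp (θ * t +
        (q * ((n * Real.cosh θ) ^ K / K.factorial - ((n - 1).choose K : ℝ)) +
          (p - q) * (((n / 2 - 1).choose K : ℝ) * (Real.exp (-θ * K) - 1)))) := fun i => by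
    refine (chernoff_dotProduct_Wmat w _ _ _).trans (Real.exp_le_exp.mpr ?_)
    simp only [hw]
    rw [sum_edgeP_mul
        (F := fun e => Real.exp (Pi.single i (-θ * sgn σ i) ⬝ᵥ pairMatrix e *ᵥ sgn σ) - 1) i
        fun e he => by
          rw [single_dotProduct_pairMatrix_mulVec_of_notMem he, Real.exp_zero, sub_self],
      sum_cluster_exp_single_dotProduct_pairMatrix hσ, neg_mul, neg_neg]
    gcongr
    exact sum_exp_single_dotProduct_pairMatrix_le hσ θ i K
  calc (bernoulliPi w).real {E | ¬ ∀ i, t ≤ ∑ j, GammaM σ (Wmat E) i j}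
      ≤ (bernoulliPi w).real
          (⋃ i, {E | -θ * t ≤ Pi.single i (-θ * sgn σ i) ⬝ᵥ Wmat E *ᵥ sgn σ}) :=
        measureReal_mono fun E hE => by
          simp only [Set.mem_ofPred_eq, not_forall, not_le, signedDegree_eq] at hE
          obtain ⟨i, hi⟩ := hE
          have := mul_le_mul_of_nonneg_left hi.le hθ
          simp only [single_dotProduct] at this
          refine Set.mem_iUnion.mpr ⟨i, ?_⟩
          simp only [Set.mem_ofPred_eq, single_dotProduct]
          linarith
    _ ≤ ∑ i, (bernoulliPi w).real
          {E | -θ * t ≤ Pi.single i (-θ * sgn σ i) ⬝ᵥ Wmat E *ᵥ sgn σ} :=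
        measureReal_iUnion_fintype_le _
    _ ≤ _ := (sum_le_sum fun i _ => hrow i).trans (by simp)

end PlantedPartition

open Asymptotics

section RateFunction

variable {K : ℕ} {α β : ℝ}

/-- The limit of `log 𝔼 exp (-θ X) / log n`, where `X` is the signed degree of a vertex of the
`(K + 1)`-uniform HSBM with parameters `α` and `β`. -/
noncomputable def signedDegreeRate (K : ℕ) (α β θ : ℝ) : ℝ :=
  β * (Real.cosh θ ^ K - 1) + (α - β) / 2 ^ K * (Real.exp (-θ * K) - 1)

lemma exp_neg_le_one_sub_add_sq_div_two {t : ℝ} (ht : 0 ≤ t) :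
    Real.exp (-t) ≤ 1 - t + t ^ 2 / 2 := by
  rw [Real.exp_neg, inv_le_iff_one_le_mul₀ (Real.exp_pos t)]
  calc 1 ≤ (1 - t + t ^ 2 / 2) * (1 + t + t ^ 2 / 2) := by nlinarith [sq_nonneg (t ^ 2)]
    _ ≤ (1 - t + t ^ 2 / 2) * Real.exp t :=
      mul_le_mul_of_nonneg_left (Real.quadratic_le_exp_of_nonneg ht)
        (by nlinarith [sq_nonneg (t - 1)])

lemma cosh_pow_sub_one_le {t : ℝ} (ht : K * t ^ 2 ≤ 2) : Real.cosh t ^ K - 1 ≤ K * t ^ 2 := by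
  have hnonneg : 0 ≤ K * (t ^ 2 / 2) := by positivity
  have habs : |K * (t ^ 2 / 2)| ≤ 1 := by
    rw [abs_of_nonneg hnonneg]
    linarith
  calc Real.cosh t ^ K - 1 ≤ Real.exp (t ^ 2 / 2) ^ K - 1 := by
        gcongr
        exact Real.cosh_le_exp_half_sq t
    _ = Real.exp (K * (t ^ 2 / 2)) - 1 := by rw [Real.exp_nat_mul]
    _ ≤ 2 * |K * (t ^ 2 / 2)| := (le_abs_self _).trans (Real.abs_exp_sub_one_le habs)
    _ = K * t ^ 2 := by rw [abs_of_nonneg hnonneg]; ring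

lemma four_mul_add_lt_mul_sq_of_sqrt_lt (hK : 1 ≤ K) (hαβ : β < α)
    (h : Real.sqrt (4 * K * ((K + 1) / 2 ^ (K + 1) * α + (1 - (K + 1) / 2 ^ (K + 1)) * β)) <
      K / 2 ^ K * (α - β)) :
    4 * β + 2 * (K + 1) * ((α - β) / 2 ^ K) < K * ((α - β) / 2 ^ K) ^ 2 := by
  have hK₀ : (0 : ℝ) < K := by exact_mod_cast hK
  have hαβ' := sub_pos.mpr hαβ
  rw [Real.sqrt_lt' (by positivity)] at h
  refine lt_of_mul_lt_mul_left (a := (K : ℝ)) ?_ hK₀.le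
  calc K * (4 * β + 2 * (K + 1) * ((α - β) / 2 ^ K))
      = 4 * K * ((K + 1) / 2 ^ (K + 1) * α + (1 - (K + 1) / 2 ^ (K + 1)) * β) := by
        rw [pow_succ]
        field_simp
        ring
    _ < (K / 2 ^ K * (α - β)) ^ 2 := h
    _ = K * (K * ((α - β) / 2 ^ K) ^ 2) := by ring

-- With `D = (α - β) / 2 ^ K`, the witness `θ = 2 / (K * D)` makes the linear term `-D * K * θ`
-- of the rate equal to `-2`; `h` keeps the bound `(β * K + D * K ^ 2 / 2) * θ ^ 2` for the
-- remaining terms below `1`.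
lemma exists_signedDegreeRate_lt_neg_one (hK : 1 ≤ K) (hβ : 0 ≤ β) (hαβ : β < α)
    (h : 4 * β + 2 * (K + 1) * ((α - β) / 2 ^ K) < K * ((α - β) / 2 ^ K) ^ 2) :
    ∃ θ > 0, signedDegreeRate K α β θ < -1 := by
  have hK₁ : (1 : ℝ) ≤ K := by exact_mod_cast hK
  set D := (α - β) / 2 ^ K
  have hD : 0 < D := div_pos (sub_pos.mpr hαβ) (by positivity)
  set u := 1 / D
  have hDu : D * u = 1 := mul_one_div_cancel hD.ne'
  have hu : 0 < u := by positivity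
  set s := 2 * u ^ 2 / K
  have hs : 0 < s := by positivity
  have hβs : β * s < (1 - 2 * u) / 2 - u / K := by
    calc β * s < (K * D ^ 2 - 2 * (K + 1) * D) / 4 * s :=
          mul_lt_mul_of_pos_right (by linarith) hs
      _ = (1 - 2 * u) / 2 - u / K := by
          simp only [s, u]
          field_simp
          ring
  have hs₁ : s ≤ 1 := by
    have : 0 ≤ u / K := by positivity
    have : s ≤ 2 * u ^ 2 := div_le_self (by positivity) hK₁
    nlinarith [mul_nonneg hβ hs.le]
  have hcosh : Real.cosh (2 * u / K) ^ K - 1 ≤ 2 * s := by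
    have hKu : K * (2 * u / K) ^ 2 = 2 * s := by
      simp only [s]
      field_simp
    rw [← hKu]
    exact cosh_pow_sub_one_le (by linarith)
  have hexp : Real.exp (-(2 * u / K) * K) - 1 ≤ -2 * u + 2 * u ^ 2 := by
    rw [show -(2 * u / K) * K = -(2 * u) by field_simp]
    linarith [exp_neg_le_one_sub_add_sq_div_two (t := 2 * u) (by positivity)]
  refine ⟨2 * u / K, by positivity, ?_⟩
  calc signedDegreeRate K α β (2 * u / K) ≤ β * (2 * s) + D * (-2 * u + 2 * u ^ 2) := by
        unfold signedDegreeRate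
        gcongr
    _ = 2 * (β * s) + D * u * (-2 + 2 * u) := by ring
    _ < -1 := by
        have : 0 < u / K := by positivity
        rw [hDu]
        linarith

lemma isEquivalent_natCast_sub_one :
    (fun n : ℕ => ((n - 1 : ℕ) : ℝ)) ~[atTop] fun n : ℕ => (n : ℝ) := by
  have h : Tendsto (fun n : ℕ => ((n - 1 : ℕ) : ℝ) - n) atTop (nhds (-1)) :=
    tendsto_const_nhds.congr' <| (eventually_ge_atTop 1).mono fun n hn => by simp [Nat.cast_sub hn]
  exact (h.isBigO_one ℝ).trans_isLittleO
    ((isLittleO_const_id_atTop (1 : ℝ)).comp_tendsto tendsto_natCast_atTop_atTop)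

lemma isEquivalent_natCast_half :
    (fun n : ℕ => ((n / 2 : ℕ) : ℝ)) ~[atTop] fun n : ℕ => (n : ℝ) / 2 := by
  have h := isEquivalent_nat_floor.comp_tendsto
    (tendsto_natCast_atTop_atTop.atTop_div_const (two_pos (α := ℝ)))
  exact h.congr_left (.of_forall fun n => by simp [Nat.floor_div_ofNat])

lemma isEquivalent_choose_sub_one (K : ℕ) :
    (fun n : ℕ => ((n - 1).choose K : ℝ)) ~[atTop] fun n : ℕ => (n : ℝ) ^ K / K.factorial :=
  ((isEquivalent_choose K).comp_tendsto (tendsto_sub_atTop_nat 1)).trans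
    ((isEquivalent_natCast_sub_one.pow K).div .refl)

lemma tendsto_pow_div_choose_sub_one (K : ℕ) (c : ℝ) :
    Tendsto (fun n : ℕ => (n * c) ^ K / K.factorial / ((n - 1).choose K : ℝ)) atTop
      (nhds (c ^ K)) := by
  have h := (IsEquivalent.refl (u := fun n : ℕ => (n * c) ^ K / (K.factorial : ℝ))).div
    (isEquivalent_choose_sub_one K)
  refine h.symm.tendsto_nhds <| tendsto_const_nhds.congr' <|
    (eventually_ge_atTop 1).mono fun n hn => ?_
  have : (n : ℝ) ≠ 0 := by exact_mod_cast (Nat.one_le_iff_ne_zero.mp hn)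
  simp only [Pi.div_apply, mul_pow]
  field_simp

lemma tendsto_choose_half_div_choose (K : ℕ) :
    Tendsto (fun n : ℕ => ((n / 2 - 1).choose K : ℝ) / ((n - 1).choose K : ℝ)) atTop
      (nhds (1 / 2 ^ K)) := by
  have h := (((isEquivalent_choose_sub_one K).comp_tendsto
    (Nat.tendsto_div_const_atTop two_ne_zero)).trans
      ((isEquivalent_natCast_half.pow K).div .refl)).div (isEquivalent_choose_sub_one K)
  refine h.symm.tendsto_nhds <| tendsto_const_nhds.congr' <|
    (eventually_ge_atTop 1).mono fun n hn => ?_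
  have : (n : ℝ) ≠ 0 := by exact_mod_cast (Nat.one_le_iff_ne_zero.mp hn)
  simp only [Pi.div_apply, Pi.pow_apply, div_pow]
  field_simp

lemma eventually_signedDegree_exponent_le (K : ℕ) (α β θ : ℝ) {r : ℝ}
    (hr : signedDegreeRate K α β θ < r) :
    ∀ᶠ n : ℕ in atTop, pParam (K + 1) β n *
        ((n * Real.cosh θ) ^ K / K.factorial - ((n - 1).choose K : ℝ)) +
      (pParam (K + 1) α n - pParam (K + 1) β n) *
        (((n / 2 - 1).choose K : ℝ) * (Real.exp (-θ * K) - 1)) ≤ r * Real.log n := by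
  have hlim : Tendsto (fun n : ℕ => β * ((n * Real.cosh θ) ^ K / K.factorial /
      ((n - 1).choose K : ℝ) - 1) + (α - β) * (((n / 2 - 1).choose K : ℝ) /
      ((n - 1).choose K : ℝ)) * (Real.exp (-θ * K) - 1)) atTop
      (nhds (signedDegreeRate K α β θ)) := by
    rw [signedDegreeRate, div_eq_mul_one_div (α - β)]
    exact (((tendsto_pow_div_choose_sub_one K _).sub_const 1).const_mul β).add
      (((tendsto_choose_half_div_choose K).const_mul (α - β)).mul_const _)
  filter_upwards [hlim.eventually_le_const hr, eventually_ge_atTop (K + 1)] with n hn hnK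
  have hchoose : ((n - 1).choose K : ℝ) ≠ 0 := by
    exact_mod_cast (Nat.choose_pos (by omega)).ne'
  refine le_of_eq_of_le ?_ (mul_le_mul_of_nonneg_right hn (Real.log_natCast_nonneg n))
  simp only [pParam, Nat.add_sub_cancel]
  field_simp

end RateFunction

section EdgeProbability

variable {k : ℕ} {α β : ℝ}

/-- The probability `edgeP p q σ e` of the hyperedge `e` as an element of the unit interval. It is
clipped to `[0, 1]`, which has no effect when `p` and `q` are probabilities. -/
noncomputable def edgeWeight {n : ℕ} (p q : ℝ) (σ : Fin n → Bool) (e : KSet n k) : unitInterval :=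
  Set.projIcc 0 1 zero_le_one (edgeP p q σ e.1)

lemma coe_edgeWeight {n : ℕ} {p q : ℝ} (hp : p ∈ Set.Icc 0 1) (hq : q ∈ Set.Icc 0 1)
    (σ : Fin n → Bool) (e : KSet n k) : (edgeWeight p q σ e : ℝ) = edgeP p q σ e.1 := by
  have he : edgeP p q σ e.1 ∈ Set.Icc (0 : ℝ) 1 := by
    unfold edgeP
    split_ifs <;> assumption
  rw [edgeWeight, Set.projIcc_of_mem _ he]

lemma pParam_nonneg (hα : 0 ≤ α) (n : ℕ) : 0 ≤ pParam k α n := by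
  have := Real.log_natCast_nonneg n
  unfold pParam
  positivity

lemma pParam_le_pParam (h : β ≤ α) (n : ℕ) : pParam k β n ≤ pParam k α n := by
  have := Real.log_natCast_nonneg n
  unfold pParam
  gcongr

lemma pParam_mul_choose_le (hk : 2 ≤ k) (hα : 0 ≤ α) {n : ℕ} (hn : k ≤ n) :
    pParam k α n * ((n - 2).choose (k - 2) : ℝ) ≤ 2 * k * α * Real.log n / n := by
  obtain ⟨K, rfl⟩ := Nat.exists_eq_add_of_le' hk
  obtain ⟨N, rfl⟩ := Nat.exists_eq_add_of_le' (hk.trans hn)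
  have := Real.log_natCast_nonneg (N + 2)
  have hchoose : ((N : ℝ) + 1) * (N.choose K : ℝ) = ((N + 1).choose (K + 1) : ℝ) * (K + 1) := by
    exact_mod_cast Nat.add_one_mul_choose_eq N K
  have hpos : (0 : ℝ) < ((N + 1).choose (K + 1) : ℝ) := by
    exact_mod_cast Nat.choose_pos (by omega)
  calc pParam (K + 2) α (N + 2) * (N.choose K : ℝ)
      = α * Real.log (N + 2 : ℕ) * ((K + 1) / (N + 1)) := by
        rw [pParam, div_mul_eq_mul_div, mul_div_assoc]
        congr 1
        change (N.choose K : ℝ) / ((N + 1).choose (K + 1) : ℝ) = _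
        rw [div_eq_div_iff hpos.ne' (by positivity), mul_comm _ ((N : ℝ) + 1), hchoose]
        exact mul_comm _ _
    _ ≤ α * Real.log (N + 2 : ℕ) * (2 * (K + 2 : ℕ) / (N + 2 : ℕ)) := by
        gcongr ?_ * ?_
        rw [div_le_div_iff₀ (by positivity) (by positivity)]
        push_cast
        nlinarith [mul_nonneg (Nat.cast_nonneg (α := ℝ) N) (Nat.cast_nonneg (α := ℝ) K)]
    _ = _ := by ring

lemma eventually_pParam_mem_Icc (hk : 2 ≤ k) (hα : 0 ≤ α) :
    ∀ᶠ n in atTop, pParam k α n ∈ Set.Icc 0 1 := by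
  have hlog : Tendsto (fun n : ℕ => 2 * k * α * (Real.log n / n)) atTop (nhds 0) := by
    simpa using ((Real.isLittleO_log_id_atTop.tendsto_div_nhds_zero).comp
      tendsto_natCast_atTop_atTop).const_mul (2 * k * α)
  filter_upwards [hlog.eventually_le_const one_pos, eventually_ge_atTop k] with n hn hkn
  refine ⟨pParam_nonneg hα n, ?_⟩
  have hchoose : (1 : ℝ) ≤ ((n - 2).choose (k - 2) : ℝ) := by
    exact_mod_cast Nat.choose_pos (by omega)
  calc pParam k α n ≤ pParam k α n * ((n - 2).choose (k - 2) : ℝ) :=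
        le_mul_of_one_le_right (pParam_nonneg hα n) hchoose
    _ ≤ 2 * k * α * Real.log n / n := pParam_mul_choose_le hk hα hkn
    _ ≤ 1 := by rwa [mul_div_assoc]

lemma eventually_coe_edgeWeight (hk : 2 ≤ k) (hβ : 0 ≤ β) (hαβ : β ≤ α) :
    ∀ᶠ n in atTop, ∀ (σ : Fin n → Bool) (e : KSet n k),
      (edgeWeight (pParam k α n) (pParam k β n) σ e : ℝ) =
        edgeP (pParam k α n) (pParam k β n) σ e.1 := by
  filter_upwards [eventually_pParam_mem_Icc hk (hβ.trans hαβ), eventually_pParam_mem_Icc hk hβ]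
    with n hp hq
  exact coe_edgeWeight hp hq

lemma eventually_abs_meanAdjacency_le (hk : 2 ≤ k) (hβ : 0 ≤ β) (hαβ : β ≤ α) :
    ∀ᶠ n in atTop, ∀ (σ : Fin n → Bool) (i j : Fin n),
      |meanAdjacency (k := k) (edgeWeight (pParam k α n) (pParam k β n) σ) i j| ≤
        2 * k * α * Real.log n / n := by
  filter_upwards [eventually_coe_edgeWeight hk hβ hαβ, eventually_ge_atTop k] with n hw hn σ i j
  refine (abs_meanAdjacency_apply_le hk (pParam_nonneg (hβ.trans hαβ) n) (fun e => ?_) i j).trans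
    (pParam_mul_choose_le hk (hβ.trans hαβ) hn)
  rw [hw, edgeP]
  split_ifs
  exacts [le_rfl, pParam_le_pParam hαβ n]

end EdgeProbability

section WithHighProbability

variable {k : ℕ} {α β : ℝ}

/-- The law of the hypergraph of the HSBM given the labels `σ`. -/
noncomputable def hsbmLaw {n : ℕ} (k : ℕ) (α β : ℝ) (σ : Fin n → Bool) :
    Measure (KSet n k → Bool) :=
  bernoulliPi (edgeWeight (pParam k α n) (pParam k β n) σ)

instance {n : ℕ} (σ : Fin n → Bool) : IsProbabilityMeasure (hsbmLaw k α β σ) := by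
  unfold hsbmLaw
  infer_instance

/-- In the HSBM, the event `P` has conditional probability `1 - o(1)` given the labels, uniformly
over all balanced labels. -/
def HoldsWhp (k : ℕ) (α β : ℝ) (P : ∀ n, (Fin n → Bool) → (KSet n k → Bool) → Prop) : Prop :=
  ∀ δ > 0, ∀ᶠ n in atTop, ∀ σ : Fin n → Bool, balanced σ →
    (hsbmLaw k α β σ).real {E | ¬ P n σ E} ≤ δ

variable {P Q : ∀ n, (Fin n → Bool) → (KSet n k → Bool) → Prop}

lemma HoldsWhp.of_tendsto_zero {b : ℕ → ℝ} (hb : Tendsto b atTop (nhds 0))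
    (h : ∀ᶠ n in atTop, ∀ σ : Fin n → Bool, balanced σ →
      (hsbmLaw k α β σ).real {E | ¬ P n σ E} ≤ b n) : HoldsWhp k α β P := fun _ hδ =>
  (h.and (hb.eventually_le_const hδ)).mono fun _ hn σ hσ => (hn.1 σ hσ).trans hn.2

lemma HoldsWhp.and (hP : HoldsWhp k α β P) (hQ : HoldsWhp k α β Q) :
    HoldsWhp k α β fun n σ E => P n σ E ∧ Q n σ E := fun δ hδ => by
  filter_upwards [hP _ (half_pos hδ), hQ _ (half_pos hδ)] with n hPn hQn σ hσ
  calc (hsbmLaw k α β σ).real {E | ¬ (P n σ E ∧ Q n σ E)}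
      ≤ (hsbmLaw k α β σ).real ({E | ¬ P n σ E} ∪ {E | ¬ Q n σ E}) :=
        measureReal_mono fun E hE => not_and_or.mp hE
    _ ≤ δ / 2 + δ / 2 := (measureReal_union_le _ _).trans (add_le_add (hPn σ hσ) (hQn σ hσ))
    _ = δ := add_halves δ

lemma HoldsWhp.mono (hP : HoldsWhp k α β P)
    (h : ∀ᶠ n in atTop, ∀ σ : Fin n → Bool, balanced σ → ∀ E, P n σ E → Q n σ E) :
    HoldsWhp k α β Q := fun δ hδ => by
  filter_upwards [hP δ hδ, h] with n hPn hn σ hσ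
  exact (measureReal_mono fun E => mt (hn σ hσ E)).trans (hPn σ hσ)

lemma exists_balanced (m : ℕ) : ∃ σ : Fin (2 * m) → Bool, balanced σ := by
  refine ⟨fun i => decide (i.1 < m), ?_⟩
  simp only [balanced, decide_eq_true_eq, Fin.card_filter_val_lt]
  omega

lemma sum_sigProb {n : ℕ} (h : ∃ σ : Fin n → Bool, balanced σ) :
    ∑ σ : Fin n → Bool, sigProb n σ = 1 := by
  obtain ⟨σ, hσ⟩ := h
  have hcard : (#{τ : Fin n → Bool | balanced τ} : ℝ) ≠ 0 := by
    exact_mod_cast (card_pos.mpr ⟨σ, by simpa using hσ⟩).ne'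
  simp only [sigProb, ← sum_filter, sum_const, nsmul_eq_mul]
  exact mul_one_div_cancel hcard

lemma prEvent_eq_sum {n : ℕ} {p q : ℝ} (hp : p ∈ Set.Icc 0 1) (hq : q ∈ Set.Icc 0 1)
    (R : (Fin n → Bool) → (KSet n k → Bool) → Prop) :
    prEvent n k p q R =
      ∑ σ, sigProb n σ * (bernoulliPi (edgeWeight p q σ)).real {E | R σ E} := by
  simp only [prEvent, hypProb, bernoulliPi_real_eq_sum, coe_edgeWeight hp hq, mul_sum, mul_assoc]
  congr! 6

lemma abs_prEvent_sub_one_le {n : ℕ} {p q : ℝ} (hp : p ∈ Set.Icc 0 1) (hq : q ∈ Set.Icc 0 1)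
    (hn : ∃ σ : Fin n → Bool, balanced σ) {R : (Fin n → Bool) → (KSet n k → Bool) → Prop} {δ : ℝ}
    (hR : ∀ σ, balanced σ → (bernoulliPi (edgeWeight p q σ)).real {E | ¬ R σ E} ≤ δ) :
    |prEvent n k p q R - 1| ≤ δ := by
  have hcompl : prEvent n k p q R - 1 =
      -∑ σ, sigProb n σ * (bernoulliPi (edgeWeight p q σ)).real {E | ¬ R σ E} := by
    rw [prEvent_eq_sum hp hq, ← sum_sigProb hn, ← sum_sub_distrib, ← sum_neg_distrib]
    refine sum_congr rfl fun σ _ => ?_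
    have := probReal_compl_eq_one_sub (μ := bernoulliPi (edgeWeight p q σ)) (s := {E | R σ E})
      (Set.toFinite _).measurableSet
    rw [show {E | ¬ R σ E} = {E | R σ E}ᶜ from rfl, this]
    ring
  have hsig : ∀ σ, 0 ≤ sigProb n σ := fun σ => by
    unfold sigProb
    split_ifs <;> positivity
  rw [hcompl, abs_neg,
    abs_of_nonneg (sum_nonneg fun σ _ => mul_nonneg (hsig σ) measureReal_nonneg)]
  calc ∑ σ, sigProb n σ * (bernoulliPi (edgeWeight p q σ)).real {E | ¬ R σ E}
      ≤ ∑ σ, sigProb n σ * δ := sum_le_sum fun σ _ => by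
        by_cases hσ : balanced σ
        · exact mul_le_mul_of_nonneg_left (hR σ hσ) (hsig σ)
        · simp [sigProb, hσ]
    _ = δ := by rw [← sum_mul, sum_sigProb hn, one_mul]

lemma HoldsWhp.tendsto_prEvent (hk : 2 ≤ k) (hα : 0 ≤ α) (hβ : 0 ≤ β) (hP : HoldsWhp k α β P) :
    Tendsto (fun m => prEvent (2 * m) k (pParam k α (2 * m)) (pParam k β (2 * m)) (P (2 * m)))
      atTop (nhds 1) := by
  have htwo : Tendsto (fun m : ℕ => 2 * m) atTop atTop := tendsto_id.const_mul_atTop' two_pos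
  refine Metric.tendsto_nhds.mpr fun δ hδ => ?_
  filter_upwards [htwo.eventually (hP _ (half_pos hδ)),
    htwo.eventually (eventually_pParam_mem_Icc hk hα),
    htwo.eventually (eventually_pParam_mem_Icc hk hβ)] with m hm hp hq
  exact (abs_prEvent_sub_one_le hp hq (exists_balanced m) hm).trans_lt (half_lt_self hδ)

lemma tendsto_log_natCast_atTop : Tendsto (fun n : ℕ => Real.log n) atTop atTop :=
  Real.tendsto_log_atTop.comp tendsto_natCast_atTop_atTop

lemma tendsto_natCast_mul_exp_neg_mul_log {c : ℝ} (hc : 1 < c) :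
    Tendsto (fun n : ℕ => n * Real.exp (-(c * Real.log n))) atTop (nhds 0) := by
  have hexp : Tendsto (fun n : ℕ => Real.exp (-((c - 1) * Real.log n))) atTop (nhds 0) :=
    Real.tendsto_exp_neg_atTop_nhds_zero.comp
      (tendsto_log_natCast_atTop.const_mul_atTop (sub_pos.mpr hc))
  refine hexp.congr' ?_
  filter_upwards [eventually_gt_atTop 0] with n hn
  rw [← Real.exp_log (Nat.cast_pos.mpr hn : (0 : ℝ) < n), ← Real.exp_add, Real.log_exp]
  ring_nf

lemma holdsWhp_degree_le (hk : 2 ≤ k) (hβ : 0 ≤ β) (hαβ : β ≤ α) :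
    ∃ C' > 0, HoldsWhp k α β fun n _ E => ∀ i, ∑ j, Wmat E i j ≤ C' * Real.log n := by
  have hα : 0 ≤ α := hβ.trans hαβ
  refine ⟨Real.exp (k ^ 2) * (2 * k * α) + 2, by positivity,
    .of_tendsto_zero (tendsto_natCast_mul_exp_neg_mul_log one_lt_two) ?_⟩
  filter_upwards [eventually_abs_meanAdjacency_le hk hβ hαβ] with n hw σ _
  refine (measureReal_not_forall_degree_le (hw σ) _).trans_eq ?_
  ring_nf

lemma holdsWhp_isLocallySparse (hk : 2 ≤ k) (hβ : 0 ≤ β) (hαβ : β ≤ α) {h : ℝ} (hh : 0 < h) :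
    ∃ γ > 0, HoldsWhp k α β fun n _ E => IsLocallySparse (Wmat E) γ (h * Real.log n) := by
  have hα : 0 ≤ α := hβ.trans hαβ
  set θ := 4 / h
  set a := Real.exp (θ * k ^ 2) * (2 * k * α)
  have ha : 0 ≤ a := by positivity
  have hgap : 2 ≤ θ * (h - a * (h / (2 * (a + 1)))) := by
    have : θ * (h - a * (h / (2 * (a + 1)))) = 2 + 2 / (a + 1) := by
      simp only [θ]
      field_simp
      ring
    rw [this]
    exact le_add_of_nonneg_right (by positivity)
  have hlim : Tendsto (fun n : ℕ => Real.exp (n * Real.exp (-(2 * Real.log n))) - 1) atTop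
      (nhds 0) := by
    simpa using ((Real.continuous_exp.tendsto 0).comp
      (tendsto_natCast_mul_exp_neg_mul_log one_lt_two)).sub_const 1
  refine ⟨h / (2 * (a + 1)), by positivity, .of_tendsto_zero hlim ?_⟩
  filter_upwards [eventually_abs_meanAdjacency_le hk hβ hαβ] with n hw σ _
  calc (hsbmLaw k α β σ).real {E | ¬ IsLocallySparse (Wmat E) (h / (2 * (a + 1))) (h * Real.log n)}
      ≤ (1 + Real.exp (-2 * Real.log n)) ^ n - 1 :=
        measureReal_not_isLocallySparse_le (by positivity) (Real.log_natCast_nonneg n) (hw σ)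
          (by positivity) hgap
    _ ≤ Real.exp (n * Real.exp (-(2 * Real.log n))) - 1 := by
        rw [Real.exp_nat_mul, neg_mul, add_comm]
        gcongr
        exact Real.add_one_le_exp _

lemma holdsWhp_cutNormLE (hk : 2 ≤ k) (hβ : 0 ≤ β) (hαβ : β ≤ α) {η : ℝ} (hη : 0 < η) :
    HoldsWhp k α β fun n σ E =>
      CutNormLE (Wmat E - meanAdjacency (k := k) (edgeWeight (pParam k α n) (pParam k β n) σ))
        (η * Real.log n * n) := by
  have hα : 0 ≤ α := hβ.trans hαβ
  have : (0 : ℝ) < k := by exact_mod_cast two_pos.trans_le hk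
  set C := 2 * k * α
  have : 0 ≤ C := by positivity
  set θ := min (1 / (k : ℝ) ^ 2) (η / (2 * k ^ 2 * (C + 1)))
  have hθ : 0 < θ := by positivity
  have hθk : θ * k ^ 2 ≤ 1 := (le_div_iff₀ (by positivity)).mp (min_le_left _ _)
  have hθη : θ * k ^ 2 * C < η := by
    have := (le_div_iff₀ (by positivity)).mp (min_le_right _ _ : θ ≤ η / (2 * k ^ 2 * (C + 1)))
    have : 0 ≤ θ * k ^ 2 * C := by positivity
    have : 0 < θ * k ^ 2 := by positivity
    linarith
  have hexponent : Tendsto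
      (fun n : ℕ => n * (Real.log 9 - θ * (η - θ * k ^ 2 * C) * Real.log n)) atTop atBot :=
    tendsto_natCast_atTop_atTop.atTop_mul_atBot₀ <| tendsto_atBot_add_const_left _ _ <|
      tendsto_neg_atTop_atBot.comp <|
        tendsto_log_natCast_atTop.const_mul_atTop (mul_pos hθ (sub_pos.mpr hθη))
  refine .of_tendsto_zero (Real.tendsto_exp_atBot.comp hexponent) ?_
  filter_upwards [eventually_abs_meanAdjacency_le hk hβ hαβ] with n hw σ _
  exact measureReal_not_cutNormLE_le (hw σ) hθ.le hθk

lemma holdsWhp_quadraticForm_le (hk : 2 ≤ k) (hβ : 0 ≤ β) (hαβ : β ≤ α) {ε : ℝ} (hε : 0 < ε) :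
    HoldsWhp k α β fun n σ E => ∀ y, labelRows σ *ᵥ y = 0 →
      y ⬝ᵥ Wmat E *ᵥ y ≤ ε * Real.log n * ∑ i, y i ^ 2 := by
  have hα : 0 ≤ α := hβ.trans hαβ
  obtain ⟨C', hC', hdegree⟩ := holdsWhp_degree_le hk hβ hαβ
  obtain ⟨h, hh, hγ⟩ :=
    exists_forall_dotProduct_mulVec_le_mul_sum_sq (C := 2 * k * α) (by positivity) hC' hε
  obtain ⟨γ, hγ₀, hsparse⟩ := holdsWhp_isLocallySparse hk hβ hαβ hh
  obtain ⟨η, hη, hquadratic⟩ := hγ γ hγ₀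
  refine ((hdegree.and hsparse).and (holdsWhp_cutNormLE hk hβ hαβ hη)).mono ?_
  filter_upwards [eventually_abs_meanAdjacency_le hk hβ hαβ, eventually_coe_edgeWeight hk hβ hαβ]
    with n hmean hw σ hσ E ⟨⟨hdeg, hloc⟩, hcut⟩ y hy
  refine hquadratic (Real.log_natCast_nonneg n) (Wmat_isSymm E) (fun i j => ?_) (fun i => ?_)
    hdeg ?_ hloc ?_ y
    (dotProduct_meanAdjacency_mulVec_nonpos hk hσ (hw σ) (pParam_nonneg hβ n)
      (pParam_le_pParam hαβ n) hy)
  · simp only [Wmat, of_apply]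
    split_ifs <;> positivity
  · simp [Wmat]
  · simpa using hmean σ
  · simpa using hcut

lemma holdsWhp_le_signedDegree {K : ℕ} (hK : 1 ≤ K) (hβ : 0 ≤ β) (hαβ : β < α)
    (hrate : ∃ θ > 0, signedDegreeRate K α β θ < -1) :
    ∃ ε > 0, HoldsWhp (K + 1) α β fun n σ E =>
      ∀ i, ε * Real.log n ≤ ∑ j, GammaM σ (Wmat E) i j := by
  obtain ⟨θ, hθ, hrate⟩ := hrate
  obtain ⟨r, hrate_r, hr⟩ := exists_between hrate
  obtain ⟨s, hrs, hs⟩ := exists_between hr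
  refine ⟨(s - r) / θ, div_pos (sub_pos.mpr hrs) hθ,
    .of_tendsto_zero (tendsto_natCast_mul_exp_neg_mul_log (lt_neg_of_lt_neg hs)) ?_⟩
  filter_upwards [eventually_signedDegree_exponent_le K α β θ hrate_r,
    eventually_coe_edgeWeight (Nat.succ_le_succ hK) hβ hαβ.le] with n hexponent hw σ hσ
  refine (measureReal_not_forall_signedDegree_le hσ (hw σ) (pParam_nonneg hβ n) hθ.le _).trans ?_
  have hθr : θ * ((s - r) / θ * Real.log n) = (s - r) * Real.log n := by field_simp
  gcongr
  linarith

end WithHighProbability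

/-- If `((k-1)/2^{k-1})(α-β) > √(4(k-1)((k/2^k)α + (1-k/2^k)β))` then
`λ₃(Π L_Γ Π) > 0` with probability `1 - o(1)`. -/
theorem lambda3_positive_whp (k : ℕ) (hk : 2 ≤ k) (α β : ℝ) (hβ : 0 < β) (hαβ : β < α)
    (hcond : Real.sqrt (4 * ((k : ℝ) - 1) * (((k : ℝ) / 2 ^ k) * α + (1 - (k : ℝ) / 2 ^ k) * β))
      < ((k : ℝ) - 1) / 2 ^ (k - 1) * (α - β)) :
    Tendsto (fun m : ℕ =>
        prEvent (2 * m) k (pParam k α (2 * m)) (pParam k β (2 * m))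
          (fun σ E => 0 < lambda3 (PiM σ * LGamma σ (Wmat E) * PiM σ)))
      atTop (nhds 1) := by
  obtain ⟨K, rfl⟩ := Nat.exists_eq_add_of_le' (one_le_two.trans hk)
  have hK : 1 ≤ K := by omega
  have hrate : ∃ θ > 0, signedDegreeRate K α β θ < -1 :=
    exists_signedDegreeRate_lt_neg_one hK hβ.le hαβ <|
      four_mul_add_lt_mul_sq_of_sqrt_lt hK hαβ (by simpa using hcond)
  obtain ⟨ε, hε, hdegree⟩ := holdsWhp_le_signedDegree hK hβ.le hαβ hrate
  have hquadratic := holdsWhp_quadraticForm_le hk hβ.le hαβ.le (half_pos hε)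
  have hlambda3 : HoldsWhp (K + 1) α β fun _ σ E =>
      0 < lambda3 (PiM σ * LGamma σ (Wmat E) * PiM σ) := by
    refine (hdegree.and hquadratic).mono ?_
    filter_upwards [eventually_ge_atTop 3, tendsto_log_natCast_atTop.eventually_gt_atTop 0]
      with n hn hlog σ hσ E ⟨hdeg, hquad⟩
    exact lambda3_pos_of_signedDegree hn hσ
      (mul_lt_mul_of_pos_right (half_lt_self hε) hlog) hdeg hquad
  simpa only using hlambda3.tendsto_prEvent hk (hβ.trans hαβ).le hβ.le
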